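/- Let p ∈ [2, ∞) be a real number. For every n ∈ ℕ and every bilinear form T : ℝⁿ × ℝⁿ → ℝ one has (∑_{i=1}^{n} (∑_{j=1}^{n} |T(e_i,e_j)|²)^{(1/2)·(p/(p−1))})^{(p−1)/p} ≤ A_{p/(p−1)} · ‖T‖_{p,∞}, where A_r is the optimal Khintchine constant. -/

import Mathlib

open MeasureTheory Real Filter

/-- The `j`-th Rademacher function, `r_j(t) = sgn(sin(2^j π t))`. -/
noncomputable def rademacher (j : ℕ) (t : ℝ) : ℝ :=
  Real.sign (Real.sin ((2 : ℝ) ^ j * Real.pi * t))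

/-- `p₀ ∈ (1,2)` is the unique solution of `Γ((p₀+1)/2) = √π / 2`. -/
noncomputable def khintchineP0 : ℝ :=
  sInf {p : ℝ | 1 < p ∧ p < 2 ∧ Real.Gamma ((p + 1) / 2) = Real.sqrt Real.pi / 2}

/-- The optimal constant `A_r` in the Khintchine inequality. -/
noncomputable def khintchineA (r : ℝ) : ℝ :=
  if r ≤ khintchineP0 then (2 : ℝ) ^ (1 / r - 1 / 2)
  else if r < 2 then
    (1 / Real.sqrt 2) * (Real.Gamma ((r + 1) / 2) / Real.sqrt Real.pi) ^ (-(1 / r))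
  else 1

/-- The `ℓ_p` norm of a vector in `ℝⁿ` (for finite `p`). -/
noncomputable def lpNorm (p : ℝ) {n : ℕ} (x : Fin n → ℝ) : ℝ :=
  (∑ i, |x i| ^ p) ^ (1 / p)

/-- The `ℓ_∞` norm of a vector in `ℝⁿ`. -/
noncomputable def linfNorm {n : ℕ} (x : Fin n → ℝ) : ℝ :=
  ⨆ i, |x i|

/-- The norm `‖T‖_{p,∞} = sup{|T(x,y)| : ‖x‖_{ℓ_p} ≤ 1, ‖y‖_{ℓ_∞} ≤ 1}` of a bilinear form. -/
noncomputable def bilinOpNorm (p : ℝ) {N n : ℕ}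
    (T : (Fin N → ℝ) →ₗ[ℝ] (Fin n → ℝ) →ₗ[ℝ] ℝ) : ℝ :=
  sSup {c : ℝ | ∃ (x : Fin N → ℝ) (y : Fin n → ℝ),
    lpNorm p x ≤ 1 ∧ linfNorm y ≤ 1 ∧ c = |T x y|}

theorem nonneg_of_hasDerivAt_nonneg {f f' : ℝ → ℝ} {b : ℝ} (h0 : f 0 = 0)
    (hd : ∀ x ∈ Set.Icc 0 b, HasDerivAt f (f' x) x) (h : ∀ x ∈ Set.Icc 0 b, 0 ≤ f' x) :
    ∀ x ∈ Set.Icc 0 b, 0 ≤ f x := by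
  have hm : MonotoneOn f (Set.Icc 0 b) := by
    apply monotoneOn_of_deriv_nonneg (convex_Icc 0 b)
    · exact fun x hx => (hd x hx).continuousAt.continuousWithinAt
    · exact fun x hx => (hd x (interior_subset hx)).differentiableAt.differentiableWithinAt
    · intro x hx
      rw [(hd x (interior_subset hx)).deriv]
      exact h x (interior_subset hx)
  intro x hx
  rw [← h0]
  exact hm ⟨le_rfl, hx.1.trans hx.2⟩ hx hx.1

theorem taylor_three_le_sin {x : ℝ} (hx : 0 ≤ x) : x - x ^ 3 / 6 ≤ sin x := by
  have h1 : ∀ s ∈ Set.Icc 0 x, 0 ≤ sin s - (s - s ^ 3 / 6) := by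
    refine nonneg_of_hasDerivAt_nonneg (f' := fun t => cos t - (1 - t ^ 2 / 2)) (by simp) ?_ ?_
    · intro t _
      refine ((hasDerivAt_sin t).sub ((hasDerivAt_id t).sub
        (((hasDerivAt_id t).pow 3).div_const 6))).congr_deriv ?_
      simp; ring
    · intro t _
      linarith [one_sub_sq_div_two_le_cos (x := t)]
  linarith [h1 x ⟨hx, le_rfl⟩]

theorem cos_le_taylor_four {x : ℝ} (hx : 0 ≤ x) : cos x ≤ 1 - x ^ 2 / 2 + x ^ 4 / 24 := by
  have h1 : ∀ s ∈ Set.Icc 0 x, 0 ≤ (1 - s ^ 2 / 2 + s ^ 4 / 24) - cos s := by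
    refine nonneg_of_hasDerivAt_nonneg (f' := fun t => sin t - (t - t ^ 3 / 6)) (by simp) ?_ ?_
    · intro t _
      refine ((((hasDerivAt_const t 1).sub (((hasDerivAt_id t).pow 2).div_const 2)).add
        (((hasDerivAt_id t).pow 4).div_const 24)).sub (hasDerivAt_cos t)).congr_deriv ?_
      simp; ring
    · intro t ht
      linarith [taylor_three_le_sin ht.1]
  linarith [h1 x ⟨hx, le_rfl⟩]

theorem sin_le_taylor_five {x : ℝ} (hx : 0 ≤ x) : sin x ≤ x - x ^ 3 / 6 + x ^ 5 / 120 := by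
  have h1 : ∀ t ∈ Set.Icc 0 x, 0 ≤ (t - t ^ 3 / 6 + t ^ 5 / 120) - sin t := by
    refine nonneg_of_hasDerivAt_nonneg (f' := fun t => (1 - t ^ 2 / 2 + t ^ 4 / 24) - cos t)
      (by simp) ?_ ?_
    · intro t _
      refine ((((hasDerivAt_id t).sub (((hasDerivAt_id t).pow 3).div_const 6)).add
          (((hasDerivAt_id t).pow 5).div_const 120)).sub (hasDerivAt_sin t)).congr_deriv ?_
      simp; ring
    · intro t ht
      linarith [cos_le_taylor_four ht.1]
  linarith [h1 x ⟨hx, le_rfl⟩]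

theorem taylor_six_le_cos {x : ℝ} (hx : 0 ≤ x) :
    1 - x ^ 2 / 2 + x ^ 4 / 24 - x ^ 6 / 720 ≤ cos x := by
  have h1 : ∀ t ∈ Set.Icc 0 x, 0 ≤ cos t - (1 - t ^ 2 / 2 + t ^ 4 / 24 - t ^ 6 / 720) := by
    refine nonneg_of_hasDerivAt_nonneg (f' := fun t => (t - t ^ 3 / 6 + t ^ 5 / 120) - sin t)
      (by simp) ?_ ?_
    · intro t _
      refine ((hasDerivAt_cos t).sub ((((hasDerivAt_const t 1).sub
          (((hasDerivAt_id t).pow 2).div_const 2)).add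
          (((hasDerivAt_id t).pow 4).div_const 24)).sub
          (((hasDerivAt_id t).pow 6).div_const 720))).congr_deriv ?_
      simp; ring
    · intro t ht
      linarith [sin_le_taylor_five ht.1]
  linarith [h1 x ⟨hx, le_rfl⟩]

/-- A Padé lower bound for the tangent, in cleared form. -/
theorem cos_mul_le_sin_mul {x : ℝ} (hx : 0 ≤ x) (hx' : x ≤ π / 2) :
    cos x * (105 * x - 10 * x ^ 3) ≤ sin x * (105 - 45 * x ^ 2 + x ^ 4) := by
  have h1 : ∀ t ∈ Set.Icc 0 (π / 2), 0 ≤ sin t - t * cos t := by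
    refine nonneg_of_hasDerivAt_nonneg (f' := fun t => t * sin t) (by simp) ?_ ?_
    · intro t _
      refine ((hasDerivAt_sin t).sub ((hasDerivAt_id t).mul (hasDerivAt_cos t))).congr_deriv ?_
      simp
    · intro t ht
      exact mul_nonneg ht.1 (sin_nonneg_of_nonneg_of_le_pi ht.1 (by linarith [ht.2, pi_pos]))
  have h2 : ∀ t ∈ Set.Icc 0 (π / 2), 0 ≤ sin t * (3 - t ^ 2) - cos t * (3 * t) := by
    refine nonneg_of_hasDerivAt_nonneg (f' := fun t => t * (sin t - t * cos t)) (by simp) ?_ ?_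
    · intro t _
      refine (((hasDerivAt_sin t).mul ((hasDerivAt_const t 3).sub ((hasDerivAt_id t).pow 2))).sub
        ((hasDerivAt_cos t).mul ((hasDerivAt_id t).const_mul 3))).congr_deriv ?_
      simp; ring
    · exact fun t ht => mul_nonneg ht.1 (h1 t ht)
  have h3 : ∀ t ∈ Set.Icc 0 (π / 2),
      0 ≤ sin t * (15 - 6 * t ^ 2) - cos t * (15 * t - t ^ 3) := by
    refine nonneg_of_hasDerivAt_nonneg
      (f' := fun t => t * (sin t * (3 - t ^ 2) - cos t * (3 * t))) (by simp) ?_ ?_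
    · intro t _
      refine (((hasDerivAt_sin t).mul ((hasDerivAt_const t 15).sub
        (((hasDerivAt_id t).pow 2).const_mul 6))).sub
        ((hasDerivAt_cos t).mul (((hasDerivAt_id t).const_mul 15).sub
          ((hasDerivAt_id t).pow 3)))).congr_deriv ?_
      simp; ring
    · exact fun t ht => mul_nonneg ht.1 (h2 t ht)
  have h4 : ∀ t ∈ Set.Icc 0 (π / 2),
      0 ≤ sin t * (105 - 45 * t ^ 2 + t ^ 4) - cos t * (105 * t - 10 * t ^ 3) := by
    refine nonneg_of_hasDerivAt_nonneg
      (f' := fun t => t * (sin t * (15 - 6 * t ^ 2) - cos t * (15 * t - t ^ 3))) (by simp) ?_ ?_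
    · intro t _
      refine (((hasDerivAt_sin t).mul (((hasDerivAt_const t 105).sub
        (((hasDerivAt_id t).pow 2).const_mul 45)).add ((hasDerivAt_id t).pow 4))).sub
        ((hasDerivAt_cos t).mul (((hasDerivAt_id t).const_mul 105).sub
          (((hasDerivAt_id t).pow 3).const_mul 10)))).congr_deriv ?_
      simp; ring
    · exact fun t ht => mul_nonneg ht.1 (h3 t ht)
  linarith [h4 x ⟨hx, hx'⟩]

/-- The squared radius at which the Gaussian `u ↦ exp (-u ^ 2 / 2)` takes the value `cos t`. -/
noncomputable def radiusSq (t : ℝ) : ℝ := -2 * Real.log (cos t)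

theorem hasDerivAt_radiusSq {t : ℝ} (ht : 0 < cos t) :
    HasDerivAt radiusSq (2 * (sin t / cos t)) t := by
  refine (((hasDerivAt_cos t).log ht.ne').const_mul (-2)).congr_deriv ?_
  ring

theorem radiusSq_zero : radiusSq 0 = 0 := by simp [radiusSq]

theorem three_pi_div_eight_sq_lt : (3 * π / 8) ^ 2 < 1.388 := by
  have := pi_lt_d4
  have := pi_pos
  nlinarith

theorem three_pi_div_eight_sq_gt : 1.3877 < (3 * π / 8) ^ 2 := by
  have := pi_gt_d4
  nlinarith

theorem le_radiusSq {t : ℝ} (ht : t ∈ Set.Icc 0 (3 * π / 8)) :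
    t ^ 2 + t ^ 4 / 6 + 2 / 45 * t ^ 6 / (1 - 3 / 10 * t ^ 2) ≤ radiusSq t := by
  have hbd : ∀ s ∈ Set.Icc 0 (3 * π / 8), s ^ 2 < 1.388 := fun s hs =>
    (pow_le_pow_left₀ hs.1 hs.2 2).trans_lt three_pi_div_eight_sq_lt
  have h : ∀ s ∈ Set.Icc 0 (3 * π / 8),
      0 ≤ radiusSq s - (s ^ 2 + s ^ 4 / 6 + 2 / 45 * s ^ 6 / (1 - 3 / 10 * s ^ 2)) := by
    refine nonneg_of_hasDerivAt_nonneg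
      (f' := fun s => 2 * (sin s / cos s) - 2 * s * (1 + s ^ 2 / 3 +
        2 / 45 * (3 * s ^ 4 - 6 / 10 * s ^ 6) / (1 - 3 / 10 * s ^ 2) ^ 2))
      (by simp [radiusSq_zero]) ?_ ?_
    · intro s hs
      have hs2 := hbd s hs
      have hd : 1 - 3 / 10 * s ^ 2 ≠ 0 := by norm_num at hs2; linarith
      have hc : 0 < cos s := cos_pos_of_mem_Ioo ⟨by linarith [hs.1, pi_pos], by linarith [hs.2, pi_pos]⟩
      refine ((hasDerivAt_radiusSq hc).sub ((((hasDerivAt_id s).pow 2).add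
        (((hasDerivAt_id s).pow 4).div_const 6)).add
        ((((hasDerivAt_id s).pow 6).const_mul (2 / 45)).div
        ((hasDerivAt_const s 1).sub (((hasDerivAt_id s).pow 2).const_mul (3 / 10))) hd))).congr_deriv ?_
      simp
      field_simp
      ring
    · intro s hs
      have hs2 := hbd s hs
      have hd : 0 < 1 - 3 / 10 * s ^ 2 := by norm_num at hs2; linarith
      have hd2 : 0 < 105 - 45 * s ^ 2 + s ^ 4 := by norm_num at hs2; nlinarith [sq_nonneg (s ^ 2)]
      have hc : 0 < cos s := cos_pos_of_mem_Ioo ⟨by linarith [hs.1, pi_pos], by linarith [hs.2, pi_pos]⟩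
      have h1 : (105 * s - 10 * s ^ 3) / (105 - 45 * s ^ 2 + s ^ 4) ≤ sin s / cos s := by
        rw [div_le_div_iff₀ hd2 hc]
        linarith [cos_mul_le_sin_mul hs.1 (by linarith [hs.2, pi_pos])]
      have h2 : s * (1 + s ^ 2 / 3 +
          2 / 45 * (3 * s ^ 4 - 6 / 10 * s ^ 6) / (1 - 3 / 10 * s ^ 2) ^ 2) ≤
          (105 * s - 10 * s ^ 3) / (105 - 45 * s ^ 2 + s ^ 4) := by
        rw [le_div_iff₀ hd2]
        have h3 : s * (1 + s ^ 2 / 3 +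
          2 / 45 * (3 * s ^ 4 - 6 / 10 * s ^ 6) / (1 - 3 / 10 * s ^ 2) ^ 2) *
          (105 - 45 * s ^ 2 + s ^ 4) = (105 * s - 10 * s ^ 3) -
          s ^ 7 * (1 / 15 + 19 / 150 * s ^ 2 - 1 / 300 * s ^ 4) / (1 - 3 / 10 * s ^ 2) ^ 2 := by
          generalize hD : 1 - 3 / 10 * s ^ 2 = D at hd
          field_simp
          rw [← hD]
          ring
        rw [h3]
        have : 0 ≤ s ^ 7 * (1 / 15 + 19 / 150 * s ^ 2 - 1 / 300 * s ^ 4) / (1 - 3 / 10 * s ^ 2) ^ 2 := by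
          have := pow_nonneg hs.1 7
          have : 0 ≤ 1 / 15 + 19 / 150 * s ^ 2 - 1 / 300 * s ^ 4 := by
            norm_num at hs2
            nlinarith [sq_nonneg s]
          positivity
        linarith
      linarith
  linarith [h t ht]

/-- The key bound on `tan t / t` in terms of `radiusSq t / t ^ 2`. -/
theorem tan_div_self_bound {t : ℝ} (h0 : 0 < t) (ht : t ≤ 3 * π / 8) :
    (sin t / cos t / t - radiusSq t / t ^ 2) * (7 + radiusSq t / t ^ 2) ≤
      11 * (radiusSq t / t ^ 2) * (radiusSq t / t ^ 2 - 1) := by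
  have hx : t ^ 2 < 1.388 := (pow_le_pow_left₀ h0.le ht 2).trans_lt three_pi_div_eight_sq_lt
  norm_num at hx
  have hG := le_radiusSq ⟨h0.le, ht⟩
  have hd : 0 < 1 - 3 / 10 * t ^ 2 := by linarith
  set x := t ^ 2 with hxd
  have hx0 : 0 < x := by positivity
  set g := 1 + x / 6 + 2 / 45 * x ^ 2 / (1 - 3 / 10 * x) with hg
  have hgG : g ≤ radiusSq t / x := by
    rw [le_div_iff₀ hx0]
    refine le_trans (le_of_eq ?_) hG
    rw [hg, show t ^ 4 = x ^ 2 by rw [hxd]; ring, show t ^ 6 = x ^ 3 by rw [hxd]; ring]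
    field_simp
  have hg1 : 1 ≤ g := by
    have : 0 ≤ 2 / 45 * x ^ 2 / (1 - 3 / 10 * x) := by positivity
    linarith
  set G := radiusSq t / x
  have hC : 0 < 1 - x / 2 + x ^ 2 / 24 - x ^ 3 / 720 := by nlinarith [sq_nonneg x, mul_pos hx0 hx0]
  have hV : sin t / cos t / t ≤
      (1 - x / 6 + x ^ 2 / 120) / (1 - x / 2 + x ^ 2 / 24 - x ^ 3 / 720) := by
    have h1 : sin t / t ≤ 1 - x / 6 + x ^ 2 / 120 := by
      rw [div_le_iff₀ h0]
      refine (sin_le_taylor_five h0.le).trans (le_of_eq ?_)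
      rw [hxd]; ring
    have h2 : 1 - x / 2 + x ^ 2 / 24 - x ^ 3 / 720 ≤ cos t := by
      refine le_trans (le_of_eq ?_) (taylor_six_le_cos h0.le)
      rw [hxd]; ring
    rw [div_right_comm]
    have h3 : 0 ≤ 1 - x / 6 + x ^ 2 / 120 := by nlinarith
    exact div_le_div₀ h3 h1 hC h2
  set V := sin t / cos t / t
  set U := (1 - x / 6 + x ^ 2 / 120) / (1 - x / 2 + x ^ 2 / 24 - x ^ 3 / 720) with hU
  have key : U * (7 + g) ≤ 12 * g ^ 2 - 4 * g := by
    have e : 12 * g ^ 2 - 4 * g - U * (7 + g) =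
        x * (1 / 2 - 89 / 180 * x + 1247 / 10800 * x ^ 2 - 73 / 6750 * x ^ 3 +
          223 / 648000 * x ^ 4 - 1 / 1944000 * x ^ 6) /
        ((1 - x / 2 + x ^ 2 / 24 - x ^ 3 / 720) * (1 - 3 / 10 * x) ^ 2) := by
      rw [hU, hg]
      generalize hD : 1 - 3 / 10 * x = D at hd
      generalize hE : 1 - x / 2 + x ^ 2 / 24 - x ^ 3 / 720 = E at hC
      field_simp
      rw [← hD, ← hE]
      ring
    have : 0 ≤ 1 / 2 - 89 / 180 * x + 1247 / 10800 * x ^ 2 - 73 / 6750 * x ^ 3 +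
          223 / 648000 * x ^ 4 - 1 / 1944000 * x ^ 6 := by
      have h1 : x ^ 3 ≤ 1.388 * x ^ 2 := by nlinarith [mul_pos hx0 hx0]
      have h2 : x ^ 6 ≤ 2 * x ^ 4 := by
        have : x ^ 2 ≤ 2 := by nlinarith
        nlinarith [pow_pos hx0 4]
      have h3 := pow_pos hx0 4
      nlinarith
    have : 0 ≤ 12 * g ^ 2 - 4 * g - U * (7 + g) := by
      rw [e]
      have := mul_pos hC (pow_pos hd 2)
      positivity
    linarith
  have hU0 : U ≤ 12 * g := by
    by_contra h
    push Not at h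
    nlinarith
  have key2 : U * (7 + G) ≤ 12 * G ^ 2 - 4 * G := by
    nlinarith
  nlinarith

theorem sq_le_radiusSq {t : ℝ} (ht : t ∈ Set.Icc 0 (3 * π / 8)) : t ^ 2 ≤ radiusSq t := by
  have hx : t ^ 2 < 1.388 := (pow_le_pow_left₀ ht.1 ht.2 2).trans_lt three_pi_div_eight_sq_lt
  norm_num at hx
  have hd : 0 < 1 - 3 / 10 * t ^ 2 := by linarith
  have h : 0 ≤ t ^ 4 / 6 + 2 / 45 * t ^ 6 / (1 - 3 / 10 * t ^ 2) := by positivity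
  linarith [le_radiusSq ht]

theorem radiusSq_pos {t : ℝ} (h0 : 0 < t) (ht : t < π / 2) : 0 < radiusSq t := by
  have hc : 0 < cos t := cos_pos_of_mem_Ioo ⟨by linarith, by linarith⟩
  have hc1 : cos t < 1 := by
    rw [← cos_zero]
    exact cos_lt_cos_of_nonneg_of_le_pi le_rfl (by linarith) h0
  have := Real.log_neg hc hc1
  unfold radiusSq
  linarith

theorem rpow_ratio_bound {q G V : ℝ} (hq : 7 / 8 ≤ q) (hq1 : q ≤ 1) (hG : 1 ≤ G) (hVG : G ≤ V)
    (h : (V - G) * (7 + G) ≤ 11 * G * (G - 1)) :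
    2 * q * (V / G) + 1 ≤ (2 * q + 1) * G ^ q := by
  have hG0 : 0 < G := by linarith
  have hD : 0 < q + (1 - q) * G := by nlinarith
  have h1 : G ^ (-q) ≤ (q + (1 - q) * G) / G := by
    have := rpow_one_add_le_one_add_mul_self (s := G⁻¹ - 1) (p := q)
      (by linarith [inv_pos.2 hG0]) (by linarith) hq1
    rw [add_sub_cancel, inv_rpow hG0.le, ← rpow_neg hG0.le] at this
    refine this.trans (le_of_eq ?_)
    field_simp
    ring
  have h2 : G / (q + (1 - q) * G) ≤ G ^ q := by
    rw [rpow_neg hG0.le] at h1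
    rw [div_le_iff₀ hD]
    have h3 : 0 < G ^ q := by positivity
    rw [inv_le_iff_one_le_mul₀ h3] at h1
    field_simp at h1
    linarith
  have h3 : 2 * (V - G) * (q + (1 - q) * G) ≤ (2 * q + 1) * G * (G - 1) := by
    nlinarith [mul_nonneg (sub_nonneg.2 hq) (mul_nonneg (sub_nonneg.2 hVG) (sub_nonneg.2 hG)),
      mul_nonneg (sub_nonneg.2 hq) (mul_nonneg hG0.le (sub_nonneg.2 hG))]
  have h4 : 2 * q * (V / G) + 1 ≤ (2 * q + 1) * (G / (q + (1 - q) * G)) := by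
    have : (2 * q + 1) * (G / (q + (1 - q) * G)) - (2 * q * (V / G) + 1) =
        q * ((2 * q + 1) * G * (G - 1) - 2 * (V - G) * (q + (1 - q) * G)) /
          (G * (q + (1 - q) * G)) := by
      generalize hD' : q + (1 - q) * G = D at hD
      field_simp
      rw [← hD']
      ring
    have h5 : 0 ≤ q * ((2 * q + 1) * G * (G - 1) - 2 * (V - G) * (q + (1 - q) * G)) /
          (G * (q + (1 - q) * G)) := by
      have := sub_nonneg.2 h3
      positivity
    linarith
  have h6 : 0 ≤ 2 * q + 1 := by linarith
  nlinarith

/-- The difference of the two rescaled tails, divided by `t`, is decreasing. -/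
theorem tail_gap_div_antitone {q : ℝ} (hq : 7 / 8 ≤ q) (hq1 : q ≤ 1) {s t : ℝ} (hs : 0 < s)
    (hst : s ≤ t) (ht : t ≤ 3 * π / 8) :
    (t ^ (-(2 * q)) - radiusSq t ^ (-q)) / t ≤ (s ^ (-(2 * q)) - radiusSq s ^ (-q)) / s := by
  have hpi := pi_pos
  have hd : ∀ x ∈ Set.Icc s t, HasDerivAt (fun x => (x ^ (-(2 * q)) - radiusSq x ^ (-q)) / x)
      ((((-(2 * q)) * x ^ (-(2 * q) - 1) - 2 * (sin x / cos x) * (-q) * radiusSq x ^ (-q - 1)) * x -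
        (x ^ (-(2 * q)) - radiusSq x ^ (-q)) * 1) / x ^ 2) x := by
    intro x hx
    have hx0 : 0 < x := hs.trans_le hx.1
    have hc : 0 < cos x := cos_pos_of_mem_Ioo ⟨by linarith, by linarith [hx.2]⟩
    refine (((hasDerivAt_rpow_const (Or.inl hx0.ne')).sub
      ((hasDerivAt_radiusSq hc).rpow_const (Or.inl ?_))).div (hasDerivAt_id x) hx0.ne')
    exact (radiusSq_pos hx0 (by linarith [hx.2])).ne'
  have hm : AntitoneOn (fun x => (x ^ (-(2 * q)) - radiusSq x ^ (-q)) / x) (Set.Icc s t) := by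
    apply antitoneOn_of_deriv_nonpos (convex_Icc s t)
    · exact fun x hx => (hd x hx).continuousAt.continuousWithinAt
    · exact fun x hx => (hd x (interior_subset hx)).differentiableAt.differentiableWithinAt
    intro x hx
    replace hx := interior_subset hx
    rw [(hd x hx).deriv]
    have hx0 : 0 < x := hs.trans_le hx.1
    have hxt : x ≤ 3 * π / 8 := hx.2.trans ht
    have hr : 0 < radiusSq x := radiusSq_pos hx0 (by linarith)
    have hG : 1 ≤ radiusSq x / x ^ 2 := by
      rw [one_le_div (by positivity)]
      exact sq_le_radiusSq ⟨hx0.le, hxt⟩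
    have hb := tan_div_self_bound hx0 hxt
    have key : 2 * q * (sin x / cos x / x / (radiusSq x / x ^ 2)) + 1 ≤
        (2 * q + 1) * (radiusSq x / x ^ 2) ^ q := by
      by_cases hVG : radiusSq x / x ^ 2 ≤ sin x / cos x / x
      · exact rpow_ratio_bound hq hq1 hG hVG hb
      · have h1 : sin x / cos x / x / (radiusSq x / x ^ 2) ≤ 1 := by
          rw [div_le_one (by positivity)]
          exact (not_le.1 hVG).le
        have h2 : 1 ≤ (radiusSq x / x ^ 2) ^ q := one_le_rpow hG (by linarith)
        nlinarith
    have e1 : x ^ (-(2 * q)) = (radiusSq x / x ^ 2) ^ q * radiusSq x ^ (-q) := by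
      rw [div_rpow hr.le (by positivity), ← rpow_natCast, ← rpow_mul hx0.le, rpow_neg hx0.le,
        rpow_neg hr.le]
      have := rpow_pos_of_pos hr q
      push_cast
      field_simp
    have e2 : x ^ (-(2 * q) - 1) * x = x ^ (-(2 * q)) := by
      rw [rpow_sub_one hx0.ne']
      field_simp
    have e3 : radiusSq x ^ (-q - 1) = radiusSq x ^ (-q) / radiusSq x := rpow_sub_one hr.ne' _
    apply div_nonpos_of_nonpos_of_nonneg _ (by positivity)
    have hpos : 0 < radiusSq x ^ (-q) := rpow_pos_of_pos hr _
    have e4 : ((-(2 * q)) * x ^ (-(2 * q) - 1) -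
        2 * (sin x / cos x) * (-q) * radiusSq x ^ (-q - 1)) * x -
        (x ^ (-(2 * q)) - radiusSq x ^ (-q)) * 1 =
        radiusSq x ^ (-q) * (2 * q * (sin x / cos x / x / (radiusSq x / x ^ 2)) + 1 -
          (2 * q + 1) * (radiusSq x / x ^ 2) ^ q) := by
      calc _ = (-(2 * q)) * (x ^ (-(2 * q) - 1) * x) +
            2 * (sin x / cos x) * q * radiusSq x ^ (-q - 1) * x -
            (x ^ (-(2 * q)) - radiusSq x ^ (-q)) := by ring
        _ = _ := by
          rw [e2, e3, e1]
          generalize sin x / cos x = T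
          generalize (radiusSq x / x ^ 2) ^ q = Y
          field_simp
          ring
    rw [e4]
    exact mul_nonpos_of_nonneg_of_nonpos hpos.le (by linarith)
  exact hm ⟨le_rfl, hst⟩ ⟨hst, le_rfl⟩ hst

theorem radiusSq_three_pi_div_eight_lt : radiusSq (3 * π / 8) < 1.934 := by
  have hcos : cos (3 * π / 8) ^ 2 = (2 - √2) / 4 := by
    rw [cos_sq, show 2 * (3 * π / 8) = π - π / 4 by ring, cos_pi_sub, cos_pi_div_four]
    ring
  have h2 : (√2) ^ 2 = 2 := sq_sqrt (by norm_num)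
  have hs0 : 1.414 < √2 := by apply lt_sqrt_of_sq_lt; norm_num
  have hs1 : √2 < 1.4143 := by rw [sqrt_lt' (by norm_num)]; norm_num
  have e : radiusSq (3 * π / 8) = Real.log (8 * ((2 + √2) / 4)) := by
    rw [radiusSq, show -2 * Real.log (cos (3 * π / 8)) = -((2 : ℕ) * Real.log (cos (3 * π / 8))) by
      push_cast; ring, ← Real.log_pow, hcos, ← Real.log_inv]
    congr 1
    have : 2 - √2 ≠ 0 := by linarith
    field_simp
    nlinarith
  rw [e, Real.log_mul (by norm_num) (by positivity), show (8 : ℝ) = 2 ^ 3 by norm_num, Real.log_pow]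
  have h3 := Real.log_le_sub_one_of_pos (x := (2 + √2) / 4) (by positivity)
  have h4 := Real.log_two_lt_d9
  push_cast
  norm_num at *
  linarith

theorem nine_fifths_power_gap {q : ℝ} (hq : 7 / 8 ≤ q) (hq1 : q ≤ 1) :
    (9 / 25 : ℝ) - 9 / 121 ≤ (9 / 25 : ℝ) ^ q - (9 / 121 : ℝ) ^ q := by
  have e1 : (9 / 25 : ℝ) ^ q = 9 / 25 * (25 / 9 : ℝ) ^ (1 - q) := by
    rw [show (25 / 9 : ℝ) = (9 / 25)⁻¹ by norm_num, inv_rpow (by norm_num), ← rpow_neg (by norm_num),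
      neg_sub, rpow_sub_one (by norm_num)]
    ring
  have e2 : (9 / 121 : ℝ) ^ q = 9 / 121 * (121 / 9 : ℝ) ^ (1 - q) := by
    rw [show (121 / 9 : ℝ) = (9 / 121)⁻¹ by norm_num, inv_rpow (by norm_num),
      ← rpow_neg (by norm_num), neg_sub, rpow_sub_one (by norm_num)]
    ring
  have h1 : 1 + (1 - q) ≤ (25 / 9 : ℝ) ^ (1 - q) := by
    have h : 1 ≤ Real.log (25 / 9) := by
      rw [Real.le_log_iff_exp_le (by norm_num)]
      have := Real.exp_one_lt_d9
      norm_num at *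
      linarith
    rw [rpow_def_of_pos (by norm_num)]
    have := add_one_le_exp (Real.log (25 / 9) * (1 - q))
    nlinarith
  have h2 : (121 / 9 : ℝ) ^ (1 - q) ≤ 1 + 4 * (1 - q) := by
    have h3 : (121 / 9 : ℝ) ≤ (3 / 2) ^ (8 : ℝ) := by norm_num
    calc (121 / 9 : ℝ) ^ (1 - q) ≤ ((3 / 2 : ℝ) ^ (8 : ℝ)) ^ (1 - q) :=
          rpow_le_rpow (by norm_num) h3 (by linarith)
      _ = (1 + 1 / 2 : ℝ) ^ (8 * (1 - q)) := by
          rw [← rpow_mul (by norm_num)]; norm_num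
      _ ≤ 1 + 8 * (1 - q) * (1 / 2) :=
          rpow_one_add_le_one_add_mul_self (by norm_num) (by linarith) (by linarith)
      _ = _ := by ring
  rw [e1, e2]
  nlinarith

/-- The comparison of the two tails at `t = 3π/8`. -/
theorem tail_gap_at_three_pi_div_eight {q : ℝ} (hq : 7 / 8 ≤ q) (hq1 : q ≤ 1) :
    (3 * π / 8) ^ (-(2 * q)) - radiusSq (3 * π / 8) ^ (-q) ≤
      (π - 3 * π / 8) ^ (-(2 * q)) - (π + 3 * π / 8) ^ (-(2 * q)) := by
  have hpi := pi_pos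
  set t := 3 * π / 8 with ht
  have ht0 : 0 < t := by positivity
  have hr : 0 < radiusSq t := radiusSq_pos ht0 (by linarith)
  have key : ∀ a : ℝ, 0 < a → (t / a) ^ (-(2 * q)) = t ^ (-(2 * q)) * (a ^ 2) ^ q := by
    intro a ha
    rw [div_rpow ht0.le ha.le, rpow_neg ha.le, div_inv_eq_mul, ← rpow_natCast, ← rpow_mul ha.le]
    norm_num
  have e1 : (π - t) ^ (-(2 * q)) = t ^ (-(2 * q)) * (9 / 25 : ℝ) ^ q := by
    rw [show π - t = t / (3 / 5) by rw [ht]; ring, key _ (by norm_num)]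
    norm_num
  have e2 : (π + t) ^ (-(2 * q)) = t ^ (-(2 * q)) * (9 / 121 : ℝ) ^ q := by
    rw [show π + t = t / (3 / 11) by rw [ht]; ring, key _ (by norm_num)]
    norm_num
  have e3 : radiusSq t ^ (-q) = t ^ (-(2 * q)) * (t ^ 2 / radiusSq t) ^ q := by
    rw [div_rpow (by positivity) hr.le, ← rpow_natCast, ← rpow_mul ht0.le, rpow_neg hr.le,
      rpow_neg ht0.le]
    have := rpow_pos_of_pos ht0 (2 * q)
    push_cast
    field_simp
  have h1 : t ^ 2 / radiusSq t ≤ (t ^ 2 / radiusSq t) ^ q := by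
    have h := rpow_le_rpow_of_exponent_ge (x := t ^ 2 / radiusSq t) (by positivity)
      ((div_le_one hr).2 (sq_le_radiusSq ⟨ht0.le, le_rfl⟩)) hq1
    rwa [rpow_one] at h
  have h2 : 0.7155 ≤ t ^ 2 / radiusSq t := by
    rw [le_div_iff₀ hr]
    have h3 := radiusSq_three_pi_div_eight_lt
    have h4 := three_pi_div_eight_sq_gt
    rw [← ht] at h3 h4
    norm_num at *
    linarith
  have h3 := nine_fifths_power_gap hq hq1
  rw [e1, e2, e3]
  have h4 : 0 < t ^ (-(2 * q)) := by positivity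
  have h5 : 1 - (t ^ 2 / radiusSq t) ^ q ≤ (9 / 25 : ℝ) ^ q - (9 / 121 : ℝ) ^ q := by
    norm_num at *
    linarith
  nlinarith

theorem mul_radiusSq_monotone {s t : ℝ} (hs : 0 < s) (hst : s ≤ t) (ht : t ≤ π / 8) :
    s * radiusSq (π / 2 - s) ≤ t * radiusSq (π / 2 - t) := by
  have hpi := pi_pos
  have hpi4 := pi_lt_d4
  have e : ∀ x, x * radiusSq (π / 2 - x) = -2 * (x * Real.log (sin x)) := fun x => by
    rw [radiusSq, cos_pi_div_two_sub]; ring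
  rw [e, e]
  have hd : ∀ x ∈ Set.Icc s t, HasDerivAt (fun x => x * Real.log (sin x))
      (1 * Real.log (sin x) + x * (cos x / sin x)) x := fun x hx =>
    (hasDerivAt_id x).mul ((hasDerivAt_sin x).log
      (sin_pos_of_pos_of_lt_pi (hs.trans_le hx.1) (by linarith [hx.2])).ne')
  have hm : AntitoneOn (fun x => x * Real.log (sin x)) (Set.Icc s t) := by
    apply antitoneOn_of_deriv_nonpos (convex_Icc s t)
    · exact fun x hx => (hd x hx).continuousAt.continuousWithinAt
    · exact fun x hx => (hd x (interior_subset hx)).differentiableAt.differentiableWithinAt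
    intro x hx
    replace hx := interior_subset hx
    rw [(hd x hx).deriv]
    have hx0 : 0 < x := hs.trans_le hx.1
    have hx1 : x ≤ 0.3927 := by norm_num at *; linarith [hx.2]
    have hsin : 0 < sin x := sin_pos_of_pos_of_lt_pi hx0 (by linarith [hx.2])
    have h1 : Real.log (sin x) ≤ Real.log 0.3827 + (sin x / 0.3827 - 1) := by
      have := Real.log_le_sub_one_of_pos (x := sin x / 0.3827) (by positivity)
      rw [Real.log_div hsin.ne' (by norm_num)] at this
      linarith
    have h2 : Real.log 0.3827 ≤ -0.959 := by
      have h := Real.log_le_sub_one_of_pos (x := 0.3827 * exp 1) (by positivity)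
      rw [Real.log_mul (by norm_num) (exp_pos 1).ne', Real.log_exp] at h
      have := Real.exp_one_lt_d9
      norm_num at *
      linarith
    have h3 : x * (cos x / sin x) ≤ 1 - x ^ 2 / 3 := by
      rw [mul_div_assoc', div_le_iff₀ hsin]
      have hc := mul_le_mul_of_nonneg_left (cos_le_taylor_four hx0.le) hx0.le
      have hx2 : 0 ≤ 1 - x ^ 2 / 3 := by norm_num at hx1; nlinarith
      have hs := mul_le_mul_of_nonneg_left (taylor_three_le_sin hx0.le) hx2
      have : 0 ≤ x ^ 5 := by positivity
      nlinarith
    have h4 := sin_le_taylor_five hx0.le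
    have h5 : (x - x ^ 3 / 6 + x ^ 5 / 120) / 0.3827 - x ^ 2 / 3 ≤ 0.959 := by
      norm_num at hx1
      have h7 : x ^ 5 ≤ 0.1543 * x ^ 3 := by
        have h8 : 0 < x ^ 3 := by positivity
        have h9 : x ^ 2 ≤ 0.1543 := by norm_num; nlinarith
        calc x ^ 5 = x ^ 2 * x ^ 3 := by ring
          _ ≤ _ := by gcongr
      norm_num at h7 ⊢
      have : 0 ≤ (x - 3927 / 10000) ^ 2 * (x + 2 * 3927 / 10000) := by positivity
      nlinarith [sq_nonneg (x - 3927 / 10000)]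
    have h6 : sin x / 0.3827 ≤ (x - x ^ 3 / 6 + x ^ 5 / 120) / 0.3827 := by gcongr
    linarith
  nlinarith [hm ⟨le_rfl, hst⟩ ⟨hst, le_rfl⟩ hst]

/-- The measure `u ^ (-p - 1) du` on the positive half-line. -/
noncomputable def powerMeasure (p : ℝ) : Measure ℝ :=
  (volume.restrict (Set.Ioi 0)).withDensity fun u => ENNReal.ofReal (u ^ (-p - 1))

theorem lintegral_powerMeasure (p : ℝ) (f : ℝ → ENNReal) (hf : Measurable f) :
    ∫⁻ u, f u ∂powerMeasure p = ∫⁻ u in Set.Ioi 0, ENNReal.ofReal (u ^ (-p - 1)) * f u := by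
  rw [powerMeasure, lintegral_withDensity_eq_lintegral_mul _ (by fun_prop) hf]
  rfl

theorem powerMeasure_absolutelyContinuous (p : ℝ) : powerMeasure p ≪ volume :=
  (withDensity_absolutelyContinuous _ _).trans (Measure.absolutelyContinuous_of_le
    Measure.restrict_le_self)

instance (p : ℝ) : NullSingletonClass (powerMeasure p) :=
  ⟨fun x => powerMeasure_absolutelyContinuous p (measure_singleton x)⟩

instance (p : ℝ) : SFinite (powerMeasure p) := by
  unfold powerMeasure; infer_instance

theorem powerMeasure_Iic_zero (p : ℝ) : powerMeasure p (Set.Iic 0) = 0 := by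
  refine withDensity_absolutelyContinuous _ _ ?_
  rw [Measure.restrict_apply measurableSet_Iic, Set.Iic_inter_Ioi, Set.Ioc_self, measure_empty]

theorem ae_powerMeasure_pos (p : ℝ) : ∀ᵐ u ∂powerMeasure p, 0 < u := by
  rw [ae_iff]
  convert powerMeasure_Iic_zero p using 2
  ext; simp

theorem powerMeasure_Ioi {p a : ℝ} (hp : 0 < p) (ha : 0 < a) :
    powerMeasure p (Set.Ioi a) = ENNReal.ofReal (a ^ (-p) / p) := by
  rw [powerMeasure, withDensity_apply _ measurableSet_Ioi, Measure.restrict_restrict measurableSet_Ioi,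
    Set.inter_eq_left.2 (Set.Ioi_subset_Ioi ha.le), ← ofReal_integral_eq_lintegral_ofReal
      (integrableOn_Ioi_rpow_of_lt (by linarith) ha), integral_Ioi_rpow_of_lt (by linarith) ha]
  · congr 1
    rw [show -p - 1 + 1 = -p by ring, neg_div_neg_eq]
  · filter_upwards [self_mem_ae_restrict measurableSet_Ioi] with x hx
    exact rpow_nonneg (ha.le.trans (le_of_lt hx)) _

theorem powerMeasure_Ioc {p a b : ℝ} (hp : 0 < p) (ha : 0 < a) (hab : a ≤ b) :
    powerMeasure p (Set.Ioc a b) = ENNReal.ofReal ((a ^ (-p) - b ^ (-p)) / p) := by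
  rw [← Set.Ioi_sdiff_Ioi, measure_sdiff (Set.Ioi_subset_Ioi hab) measurableSet_Ioi.nullMeasurableSet,
    powerMeasure_Ioi hp ha, powerMeasure_Ioi hp (ha.trans_le hab), ← ENNReal.ofReal_sub, sub_div]
  · have := ha.trans_le hab
    positivity
  · rw [powerMeasure_Ioi hp (ha.trans_le hab)]
    exact ENNReal.ofReal_ne_top

theorem rpow_neg_gap_ratio {p c s t : ℝ} (hp : 0 < p) (hs : 0 < s) (hst : s ≤ t) (htc : t < c) :
    t / s * ((c - s) ^ (-p) - (c + s) ^ (-p)) ≤ (c - t) ^ (-p) - (c + t) ^ (-p) := by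
  have ht : 0 < t := hs.trans_le hst
  have hconv : ConvexOn ℝ (Set.Ico 0 c) fun x => (c - x) ^ (-p) - (c + x) ^ (-p) := by
    have hd : ∀ r : ℝ, ∀ x ∈ Set.Ico 0 c, HasDerivAt (fun x => (c - x) ^ r) (-r * (c - x) ^ (r - 1)) x ∧
        HasDerivAt (fun x => (c + x) ^ r) (r * (c + x) ^ (r - 1)) x := fun r x hx => by
      constructor
      · refine (((hasDerivAt_id x).const_sub c).rpow_const (Or.inl ?_)).congr_deriv ?_
        · simpa using (sub_pos.2 hx.2).ne'
        · simp
      · refine (((hasDerivAt_id x).const_add c).rpow_const (Or.inl ?_)).congr_deriv ?_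
        · have : 0 < c + x := by linarith [hx.1, hx.2]
          simpa using this.ne'
        · simp
    refine convexOn_of_hasDerivWithinAt2_nonneg (convex_Ico 0 c)
      (f' := fun x => - -p * (c - x) ^ (-p - 1) - -p * (c + x) ^ (-p - 1))
      (f'' := fun x => - -p * (-(-p - 1) * (c - x) ^ (-p - 1 - 1)) -
        -p * ((-p - 1) * (c + x) ^ (-p - 1 - 1))) ?_ ?_ ?_ ?_
    · exact fun x hx => ((hd _ x hx).1.sub (hd _ x hx).2).continuousAt.continuousWithinAt
    · intro x hx
      replace hx := interior_subset hx
      exact ((hd _ x hx).1.sub (hd _ x hx).2).hasDerivWithinAt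
    · intro x hx
      replace hx := interior_subset hx
      exact (((hd _ x hx).1.const_mul _).sub ((hd _ x hx).2.const_mul _)).hasDerivWithinAt
    · intro x hx
      replace hx := interior_subset hx
      have h1 : (c + x) ^ (-p - 1 - 1) ≤ (c - x) ^ (-p - 1 - 1) :=
        rpow_le_rpow_of_nonpos (by linarith [hx.2]) (by linarith [hx.1]) (by linarith)
      have h2 : 0 ≤ p * (p + 1) := by positivity
      nlinarith
  have h := hconv.2 (show (0 : ℝ) ∈ Set.Ico 0 c from ⟨le_rfl, by linarith⟩) (show t ∈ Set.Ico 0 c from ⟨ht.le, htc⟩)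
    (show 0 ≤ 1 - s / t by rw [sub_nonneg, div_le_one ht]; exact hst) (show 0 ≤ s / t by positivity) (by ring)
  simp only [smul_eq_mul, mul_zero, zero_add, sub_zero, add_zero, sub_self] at h
  rw [div_mul_cancel₀ _ ht.ne'] at h
  rw [div_mul_eq_mul_div, div_le_iff₀ hs]
  rw [div_mul_eq_mul_div, le_div_iff₀ ht] at h
  linarith

/-- Centered intervals have measure growing superlinearly in the radius. -/
theorem powerMeasure_Icc_ratio {p c s t : ℝ} (hp : 0 < p) (hs : 0 < s) (hst : s ≤ t) (htc : t < c) :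
    ENNReal.ofReal (t / s) * powerMeasure p (Set.Icc (c - s) (c + s)) ≤
      powerMeasure p (Set.Icc (c - t) (c + t)) := by
  have ht : 0 < t := hs.trans_le hst
  rw [← Measure.restrict_apply_univ, ← Measure.restrict_apply_univ (Set.Icc (c - t) _),
    ← restrict_Ioc_eq_restrict_Icc, ← restrict_Ioc_eq_restrict_Icc,
    Measure.restrict_apply_univ, Measure.restrict_apply_univ, powerMeasure_Ioc hp (by linarith)
    (by linarith), powerMeasure_Ioc hp (by linarith) (by linarith),
    ← ENNReal.ofReal_mul (by positivity)]
  apply ENNReal.ofReal_le_ofReal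
  rw [mul_div_assoc']
  gcongr
  exact rpow_neg_gap_ratio hp hs hst htc

theorem lintegral_powerMeasure_comp_mul {p a : ℝ} (ha : 0 < a) {f : ℝ → ENNReal} (hf : Measurable f) :
    ∫⁻ u, f (a * u) ∂powerMeasure p = ENNReal.ofReal (a ^ p) * ∫⁻ u, f u ∂powerMeasure p := by
  rw [lintegral_powerMeasure _ _ hf, lintegral_powerMeasure _ (fun u => f (a * u)) (hf.comp (measurable_const_mul a)),
    ← lintegral_indicator measurableSet_Ioi, ← lintegral_indicator measurableSet_Ioi]
  conv_rhs => rw [← Real.smul_map_volume_mul_left ha.ne']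
  rw [lintegral_smul_measure, lintegral_map (by measurability) (by fun_prop), smul_eq_mul,
    ← mul_assoc, ← lintegral_const_mul' _ _ (by finiteness)]
  congr 1
  ext u
  by_cases hu : 0 < u
  · rw [Set.indicator_of_mem (by exact hu), Set.indicator_of_mem (by exact mul_pos ha hu),
      ← mul_assoc]
    congr 1
    rw [abs_of_pos ha, ← ENNReal.ofReal_mul (by positivity), ← ENNReal.ofReal_mul (by positivity),
      mul_rpow ha.le hu.le, rpow_sub_one ha.ne', rpow_neg ha.le]
    congr 1
    have := rpow_pos_of_pos ha p
    field_simp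
  · rw [Set.indicator_of_notMem (by exact hu), Set.indicator_of_notMem, mul_zero]
    simpa [mul_pos_iff_of_pos_left ha] using hu

theorem cos_le_abs_cos_iff {τ u : ℝ} (h0 : 0 ≤ τ) (h1 : τ ≤ π / 2) :
    cos τ ≤ |cos u| ↔ ∃ k : ℤ, |u - k * π| ≤ τ := by
  have hpi := pi_pos
  have e : ∀ k : ℤ, |cos (u - k * π)| = |cos u| := fun k => by
    rw [cos_sub_int_mul_pi, abs_mul, abs_neg_one_zpow, one_mul]
  constructor
  · intro h
    have hk : |u - round (u / π) * π| ≤ π / 2 := by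
      have h2 := abs_sub_round (u / π)
      calc |u - round (u / π) * π| = |u / π - round (u / π)| * π := by
            rw [← abs_of_pos hpi, ← abs_mul, abs_of_pos hpi, sub_mul, div_mul_cancel₀ _ hpi.ne']
        _ ≤ 1 / 2 * π := by gcongr
        _ = _ := by ring
    refine ⟨round (u / π), ?_⟩
    rw [← e (round (u / π)), ← cos_abs (u - _), abs_of_nonneg (cos_nonneg_of_mem_Icc
      ⟨by linarith [abs_nonneg (u - round (u / π) * π)], hk⟩)] at h
    exact (strictAntiOn_cos.le_iff_ge ⟨h0, by linarith⟩ ⟨abs_nonneg _, by linarith⟩).1 h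
  · rintro ⟨k, hk⟩
    rw [← e k]
    refine le_trans ?_ (le_abs_self _)
    rw [← cos_abs (u - _)]
    exact cos_le_cos_of_nonneg_of_le_pi (abs_nonneg _) (by linarith) hk

theorem abs_cos_lt_cos_iff {τ u : ℝ} (h0 : 0 ≤ τ) (h1 : τ ≤ π / 2) :
    |cos u| < cos τ ↔ ∃ k : ℤ, |u - (k + 1 / 2) * π| < π / 2 - τ := by
  have hpi := pi_pos
  rw [← not_le, cos_le_abs_cos_iff h0 h1]
  constructor
  · intro h
    push Not at h
    refine ⟨⌊u / π⌋, ?_⟩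
    have h2 := h ⌊u / π⌋
    have h3 := h (⌊u / π⌋ + 1)
    have h4 : ⌊u / π⌋ * π ≤ u := (le_div_iff₀ hpi).1 (Int.floor_le _)
    have h5 : u < (⌊u / π⌋ + 1) * π := (div_lt_iff₀ hpi).1 (Int.lt_floor_add_one _)
    rw [abs_of_nonneg (by linarith)] at h2
    push_cast at h3
    rw [abs_of_nonpos (by linarith)] at h3
    rw [abs_lt]
    constructor <;> linarith
  · rintro ⟨k, hk⟩ ⟨m, hm⟩
    rw [abs_lt] at hk
    rw [abs_le] at hm
    rcases le_or_gt m k with h | h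
    · have : (m : ℝ) ≤ k := by exact_mod_cast h
      nlinarith
    · have : (k : ℝ) + 1 ≤ m := by exact_mod_cast h
      nlinarith

theorem measurableSet_abs_cos_lt (y : ℝ) : MeasurableSet {u | |cos u| < y} :=
  measurableSet_lt (by fun_prop) measurable_const

theorem powerMeasure_abs_cos_lt_add {p τ : ℝ} (h0 : 0 < τ) (h1 : τ < π / 2) :
    powerMeasure p {u | |cos u| < cos τ} +
      ∑' k : ℕ, powerMeasure p (Set.Icc ((k + 1) * π - τ) ((k + 1) * π + τ)) =
      powerMeasure p (Set.Ioi τ) := by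
  have hpi := pi_pos
  rw [← measure_inter_add_sdiff (Set.Ioi τ) (measurableSet_abs_cos_lt (cos τ)),
    ← measure_iUnion]
  · congr 1
    · apply measure_congr
      filter_upwards [ae_powerMeasure_pos p] with u hu
      refine propext ⟨fun h => ⟨?_, h⟩, fun h => h.2⟩
      by_contra hc
      have hc : u ≤ τ := not_lt.1 hc
      exact absurd h (not_lt.2 ((cos_le_cos_of_nonneg_of_le_pi hu.le (by linarith) hc).trans
        (le_abs_self _)))
    · congr 1
      ext u
      simp only [Set.mem_iUnion, Set.mem_Icc, Set.mem_sdiff, Set.mem_Ioi, Set.mem_ofPred_eq, not_lt]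
      rw [cos_le_abs_cos_iff h0.le h1.le]
      constructor
      · rintro ⟨k, hk⟩
        refine ⟨?_, k + 1, ?_⟩
        · have : (0 : ℝ) ≤ k * π := by positivity
          nlinarith
        · push_cast
          rw [abs_le]
          constructor <;> linarith
      · rintro ⟨hu, k, hk⟩
        rw [abs_le] at hk
        have hk0 : 0 < k := by
          by_contra hc
          have : (k : ℝ) ≤ 0 := by exact_mod_cast not_lt.1 hc
          nlinarith
        refine ⟨k.toNat - 1, ?_⟩
        have : ((k.toNat - 1 : ℕ) : ℝ) + 1 = k := by
          have h : ((k.toNat - 1 : ℕ) : ℤ) + 1 = k := by omega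
          exact_mod_cast h
        rw [this]
        constructor <;> linarith
  · intro i j hij
    rw [Function.onFun, Set.disjoint_left]
    rintro u ⟨h2, h3⟩ ⟨h4, h5⟩
    rcases lt_or_gt_of_ne hij with h | h
    · have : (i : ℝ) + 1 ≤ j := by exact_mod_cast h
      nlinarith
    · have : (j : ℝ) + 1 ≤ i := by exact_mod_cast h
      nlinarith
  · exact fun _ => measurableSet_Icc

theorem powerMeasure_abs_cos_lt {p τ : ℝ} (h0 : 0 ≤ τ) (h1 : τ ≤ π / 2) :
    powerMeasure p {u | |cos u| < cos τ} = ∑' k : ℕ, powerMeasure p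
      (Set.Icc ((k + 1 / 2) * π - (π / 2 - τ)) ((k + 1 / 2) * π + (π / 2 - τ))) := by
  have hpi := pi_pos
  simp_rw [← measure_congr (Ioo_ae_eq_Icc (μ := powerMeasure p))]
  rw [← measure_iUnion]
  · apply measure_congr
    filter_upwards [ae_powerMeasure_pos p] with u hu
    refine propext ?_
    change |cos u| < cos τ ↔ u ∈ ⋃ k : ℕ,
      Set.Ioo ((k + 1 / 2 : ℝ) * π - (π / 2 - τ)) ((k + 1 / 2) * π + (π / 2 - τ))
    rw [abs_cos_lt_cos_iff h0 h1]
    simp only [Set.mem_iUnion, Set.mem_Ioo]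
    constructor
    · rintro ⟨k, hk⟩
      rw [abs_lt] at hk
      have hk0 : 0 ≤ k := by
        by_contra hc
        have : (k : ℝ) + 1 ≤ 0 := by exact_mod_cast not_le.1 hc
        nlinarith
      lift k to ℕ using hk0
      refine ⟨k, ?_⟩
      push_cast at hk
      constructor <;> linarith
    · rintro ⟨k, hk⟩
      refine ⟨k, ?_⟩
      push_cast
      rw [abs_lt]
      constructor <;> linarith
  · intro i j hij
    rw [Function.onFun, Set.disjoint_left]
    rintro u ⟨h2, h3⟩ ⟨h4, h5⟩
    rcases lt_or_gt_of_ne hij with h | h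
    · have : (i : ℝ) + 1 ≤ j := by exact_mod_cast h
      nlinarith
    · have : (j : ℝ) + 1 ≤ i := by exact_mod_cast h
      nlinarith
  · exact fun _ => measurableSet_Ioo

/-- The `powerMeasure` of the superlevel region of the Gaussian at height `cos τ`. -/
theorem powerMeasure_exp_lt {q τ : ℝ} (hq : 0 < q) (h0 : 0 < τ) (h1 : τ < π / 2) :
    powerMeasure (2 * q) {u | exp (-u ^ 2 / 2) < cos τ} =
      ENNReal.ofReal (radiusSq τ ^ (-q) / (2 * q)) := by
  have hr := radiusSq_pos h0 h1
  have hc : 0 < cos τ := cos_pos_of_mem_Ioo ⟨by linarith, h1⟩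
  have e : radiusSq τ ^ (-q) = √(radiusSq τ) ^ (-(2 * q)) := by
    rw [sqrt_eq_rpow, ← rpow_mul hr.le]
    congr 1; ring
  rw [e, ← powerMeasure_Ioi (by positivity) (sqrt_pos.2 hr)]
  apply measure_congr
  filter_upwards [ae_powerMeasure_pos (2 * q)] with u hu
  refine propext ?_
  change exp (-u ^ 2 / 2) < cos τ ↔ √(radiusSq τ) < u
  rw [sqrt_lt hr.le hu.le, ← Real.lt_log_iff_exp_lt hc, radiusSq]
  constructor <;> intro h <;> linarith

theorem powerMeasure_bands_ne_top {p τ : ℝ} (hp : 0 < p) (h0 : 0 < τ) (h1 : τ < π / 2) :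
    ∑' k : ℕ, powerMeasure p (Set.Icc ((k + 1) * π - τ) ((k + 1) * π + τ)) ≠ ⊤ := by
  have h := powerMeasure_abs_cos_lt_add (p := p) h0 h1
  rw [powerMeasure_Ioi hp h0] at h
  exact ne_top_of_le_ne_top ENNReal.ofReal_ne_top (h ▸ le_add_self)

theorem powerMeasure_abs_cos_lt_le_of_gap {q τ : ℝ} (hq : 0 < q) (h0 : 0 < τ) (h1 : τ < π / 2)
    (h : ENNReal.ofReal ((τ ^ (-(2 * q)) - radiusSq τ ^ (-q)) / (2 * q)) ≤
      ∑' k : ℕ, powerMeasure (2 * q) (Set.Icc ((k + 1) * π - τ) ((k + 1) * π + τ))) :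
    powerMeasure (2 * q) {u | |cos u| < cos τ} ≤ ENNReal.ofReal (radiusSq τ ^ (-q) / (2 * q)) := by
  have hfin := powerMeasure_bands_ne_top (p := 2 * q) (by positivity) h0 h1
  rw [← ENNReal.add_le_add_iff_right hfin, powerMeasure_abs_cos_lt_add h0 h1,
    powerMeasure_Ioi (by positivity) h0]
  refine le_trans ?_ (add_le_add_right h _)
  refine le_trans (le_of_eq ?_) ENNReal.ofReal_add_le
  congr 1; ring

theorem gap_lt_of_lt_powerMeasure {q τ : ℝ} (hq : 0 < q) (h0 : 0 < τ) (h1 : τ < π / 2)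
    (h : powerMeasure (2 * q) {u | |cos u| < cos τ} < ENNReal.ofReal (radiusSq τ ^ (-q) / (2 * q))) :
    ENNReal.ofReal ((τ ^ (-(2 * q)) - radiusSq τ ^ (-q)) / (2 * q)) ≤
      ∑' k : ℕ, powerMeasure (2 * q) (Set.Icc ((k + 1) * π - τ) ((k + 1) * π + τ)) := by
  have hr := radiusSq_pos h0 h1
  rw [sub_div, ENNReal.ofReal_sub _ (by positivity), tsub_le_iff_left,
    ← powerMeasure_Ioi (by positivity) h0, ← powerMeasure_abs_cos_lt_add h0 h1]
  gcongr

theorem powerMeasure_abs_cos_lt_le_of_three_pi_div_eight_le {q τ : ℝ} (hq : 7 / 8 ≤ q) (hq1 : q ≤ 1)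
    (h0 : 3 * π / 8 ≤ τ) (h1 : τ < π / 2) :
    powerMeasure (2 * q) {u | |cos u| < cos τ} ≤ ENNReal.ofReal (radiusSq τ ^ (-q) / (2 * q)) := by
  have hpi := pi_pos
  have hq0 : 0 < q := by linarith
  have hend : powerMeasure (2 * q) {u | |cos u| < cos (3 * π / 8)} ≤
      ENNReal.ofReal (radiusSq (3 * π / 8) ^ (-q) / (2 * q)) := by
    apply powerMeasure_abs_cos_lt_le_of_gap hq0 (by positivity) (by linarith)
    refine le_trans ?_ (ENNReal.le_tsum 0)
    rw [← measure_congr Ioc_ae_eq_Icc, powerMeasure_Ioc (by positivity) (by push_cast; linarith)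
      (by linarith)]
    have := tail_gap_at_three_pi_div_eight hq hq1
    simp only [Nat.cast_zero, zero_add, one_mul]
    gcongr
  have hs : 0 < π / 2 - τ := by linarith
  have hratio : ENNReal.ofReal (π / 8 / (π / 2 - τ)) * powerMeasure (2 * q) {u | |cos u| < cos τ} ≤
      powerMeasure (2 * q) {u | |cos u| < cos (3 * π / 8)} := by
    rw [powerMeasure_abs_cos_lt (by linarith) h1.le, powerMeasure_abs_cos_lt (by linarith)
      (by linarith), ← ENNReal.tsum_mul_left]
    refine ENNReal.tsum_le_tsum fun k => ?_
    rw [show π / 2 - 3 * π / 8 = π / 8 by ring]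
    refine powerMeasure_Icc_ratio (by positivity) hs (by linarith) ?_
    have : (0 : ℝ) ≤ k * π := by positivity
    nlinarith
  have hr := radiusSq_pos (t := 3 * π / 8) (by positivity) (by linarith)
  have hr' := radiusSq_pos (t := τ) (by linarith) (by linarith)
  have hmono : radiusSq (3 * π / 8) ^ (-q) ≤ π / 8 / (π / 2 - τ) * radiusSq τ ^ (-q) := by
    have h := mul_radiusSq_monotone hs (show π / 2 - τ ≤ π / 8 by linarith) le_rfl
    rw [show π / 2 - π / 8 = 3 * π / 8 by ring, sub_sub_cancel] at h
    have h2 := rpow_le_rpow (by positivity) h hq0.le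
    rw [mul_rpow hs.le hr'.le, mul_rpow (by positivity) hr.le] at h2
    have h3 : (π / 2 - τ) ^ (1 - q) ≤ (π / 8) ^ (1 - q) :=
      rpow_le_rpow hs.le (by linarith) (by linarith)
    have e : ∀ x : ℝ, 0 < x → x = x ^ (1 - q) * x ^ q := fun x hx => by
      rw [← rpow_add hx]; simp
    have h4 : (π / 2 - τ) * radiusSq τ ^ q ≤ π / 8 * radiusSq (3 * π / 8) ^ q := by
      rw [e _ hs, e (π / 8) (by positivity), mul_assoc, mul_assoc]
      gcongr
    rw [rpow_neg hr.le, rpow_neg hr'.le]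
    have h5 := rpow_pos_of_pos hr q
    have h6 := rpow_pos_of_pos hr' q
    rw [← div_eq_mul_inv, div_div, inv_eq_one_div, div_le_div_iff₀ h5 (by positivity), one_mul]
    exact h4
  have hc : ENNReal.ofReal (π / 8 / (π / 2 - τ)) ≠ 0 := by
    rw [Ne, ENNReal.ofReal_eq_zero, not_le]
    positivity
  rw [← ENNReal.mul_le_mul_iff_right hc ENNReal.ofReal_ne_top, ← ENNReal.ofReal_mul (by positivity)]
  refine (hratio.trans hend).trans (ENNReal.ofReal_le_ofReal ?_)
  rw [mul_div_assoc']
  gcongr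

theorem powerMeasure_single_crossing {q s t : ℝ} (hq : 7 / 8 ≤ q) (hq1 : q ≤ 1) (hs : 0 < s)
    (hst : s ≤ t) (ht : t < π / 2)
    (h : powerMeasure (2 * q) {u | |cos u| < cos s} < ENNReal.ofReal (radiusSq s ^ (-q) / (2 * q))) :
    powerMeasure (2 * q) {u | |cos u| < cos t} ≤ ENNReal.ofReal (radiusSq t ^ (-q) / (2 * q)) := by
  have hpi := pi_pos
  have hq0 : 0 < q := by linarith
  have ht0 : 0 < t := hs.trans_le hst
  rcases le_or_gt (3 * π / 8) t with h8 | h8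
  · exact powerMeasure_abs_cos_lt_le_of_three_pi_div_eight_le hq hq1 h8 ht
  apply powerMeasure_abs_cos_lt_le_of_gap hq0 ht0 ht
  have h1 := gap_lt_of_lt_powerMeasure hq0 hs (by linarith) h
  have h2 := tail_gap_div_antitone hq hq1 hs hst h8.le
  rw [div_le_iff₀ ht0] at h2
  calc ENNReal.ofReal ((t ^ (-(2 * q)) - radiusSq t ^ (-q)) / (2 * q))
      ≤ ENNReal.ofReal (t / s * ((s ^ (-(2 * q)) - radiusSq s ^ (-q)) / (2 * q))) := by
        apply ENNReal.ofReal_le_ofReal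
        calc _ ≤ (s ^ (-(2 * q)) - radiusSq s ^ (-q)) / s * t / (2 * q) := by gcongr
          _ = _ := by ring
    _ = ENNReal.ofReal (t / s) * ENNReal.ofReal ((s ^ (-(2 * q)) - radiusSq s ^ (-q)) / (2 * q)) :=
        ENNReal.ofReal_mul (by positivity)
    _ ≤ ENNReal.ofReal (t / s) *
        ∑' k : ℕ, powerMeasure (2 * q) (Set.Icc ((k + 1) * π - s) ((k + 1) * π + s)) := by gcongr
    _ ≤ _ := by
        rw [← ENNReal.tsum_mul_left]
        refine ENNReal.tsum_le_tsum fun k => powerMeasure_Icc_ratio (by positivity) hs hst ?_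
        have : (0 : ℝ) ≤ k * π := by positivity
        nlinarith

theorem lintegral_one_sub_rpow {μ : Measure ℝ} [SFinite μ] {f : ℝ → ℝ} (hf : Measurable f)
    (h0 : ∀ u, 0 ≤ f u) (h1 : ∀ u, f u ≤ 1) {s : ℝ} (hs : 1 ≤ s) :
    ∫⁻ u, ENNReal.ofReal (1 - f u ^ s) ∂μ =
      ∫⁻ y in Set.Ioo (0 : ℝ) 1, ENNReal.ofReal (s * y ^ (s - 1)) * μ {u | f u < y} := by
  have hpt : ∀ u, ENNReal.ofReal (1 - f u ^ s) = ∫⁻ y in Set.Ioo (0 : ℝ) 1,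
      ENNReal.ofReal (s * y ^ (s - 1)) * ({v | f v < y}.indicator 1 u) := by
    intro u
    have e1 : ∫ y in f u..1, s * y ^ (s - 1) = 1 - f u ^ s := by
      rw [intervalIntegral.integral_const_mul, integral_rpow (Or.inl (by linarith)), sub_add_cancel,
        one_rpow, mul_div_cancel₀ _ (by linarith)]
    have e2 : ∀ y ∈ Set.Ioo (0 : ℝ) 1, ENNReal.ofReal (s * y ^ (s - 1)) * ({v | f v < y}.indicator 1 u)
        = (Set.Ioo (f u) 1).indicator (fun y => ENNReal.ofReal (s * y ^ (s - 1))) y := by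
      intro y hy
      by_cases h : f u < y
      · rw [Set.indicator_of_mem (by exact h), Set.indicator_of_mem (by exact ⟨h, hy.2⟩)]
        simp
      · rw [Set.indicator_of_notMem (by exact h), Set.indicator_of_notMem (by exact fun h' => h h'.1),
          mul_zero]
    rw [setLIntegral_congr_fun measurableSet_Ioo e2, setLIntegral_indicator measurableSet_Ioo,
      Set.inter_eq_left.2 (Set.Ioo_subset_Ioo_left (h0 u)), ← e1,
      intervalIntegral.integral_of_le (h1 u), integral_Ioc_eq_integral_Ioo,
      ofReal_integral_eq_lintegral_ofReal]
    · refine IntegrableOn.mono_set ?_ (Set.Ioo_subset_Ioc_self (a := 1) (b := f u))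
      rw [← intervalIntegrable_iff_integrableOn_Ioc_of_le (h1 u)]
      exact (intervalIntegral.intervalIntegrable_rpow' (by linarith)).const_mul _
    · filter_upwards [self_mem_ae_restrict measurableSet_Ioo] with y hy
      have : 0 ≤ y := (h0 u).trans hy.1.le
      simp only [Pi.zero_apply]
      positivity
  simp_rw [hpt]
  rw [lintegral_lintegral_swap]
  · congr 1
    ext y
    rw [lintegral_const_mul' _ _ ENNReal.ofReal_ne_top, lintegral_indicator_one]
    exact measurableSet_lt hf measurable_const
  · apply Measurable.aemeasurable
    have h : Measurable fun x : ℝ × ℝ => ({x : ℝ × ℝ | f x.1 < x.2}.indicator (1 : ℝ × ℝ → ENNReal) x) :=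
      measurable_one.indicator (measurableSet_lt (hf.comp measurable_fst) measurable_snd)
    exact (show Measurable fun x : ℝ × ℝ => ENNReal.ofReal (s * x.2 ^ (s - 1)) by fun_prop).mul h

/-- A single crossing upgrades an integral comparison with weight `y` to weight `y ^ (s - 1)`. -/
theorem lintegral_mul_rpow_le_of_single_crossing {A B : ℝ → ENNReal} (hA : Measurable A)
    (hB : Measurable B) {s : ℝ} (hs : 2 ≤ s)
    (hcross : ∀ y ∈ Set.Ioo (0 : ℝ) 1, ∀ z ∈ Set.Ioo (0 : ℝ) 1, y ≤ z → B z < A z → B y ≤ A y)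
    (h2 : ∫⁻ y in Set.Ioo (0 : ℝ) 1, ENNReal.ofReal (2 * y) * A y ≤
      ∫⁻ y in Set.Ioo (0 : ℝ) 1, ENNReal.ofReal (2 * y) * B y)
    (hfin : ∫⁻ y in Set.Ioo (0 : ℝ) 1, ENNReal.ofReal (2 * y) * B y ≠ ⊤) :
    ∫⁻ y in Set.Ioo (0 : ℝ) 1, ENNReal.ofReal (s * y ^ (s - 1)) * A y ≤
      ∫⁻ y in Set.Ioo (0 : ℝ) 1, ENNReal.ofReal (s * y ^ (s - 1)) * B y := by
  let Z : Set ℝ := {y | y ∈ Set.Ioo (0 : ℝ) 1 ∧ B y < A y}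
  let y0 : ℝ := sSup (insert 0 Z)
  have hbd : BddAbove (insert 0 Z) := ⟨1, by
    rintro y (rfl | hy)
    · norm_num
    · exact hy.1.2.le⟩
  have hy0 : 0 ≤ y0 := le_csSup hbd (Set.mem_insert _ _)
  let c : ENNReal := ENNReal.ofReal (s / 2 * y0 ^ (s - 2))
  let W : ℝ → ENNReal := fun y => ENNReal.ofReal (s * y ^ (s - 1))
  let L : ℝ → ENNReal := fun y => ENNReal.ofReal (2 * y)
  have hpt : ∀ y ∈ Set.Ioo (0 : ℝ) 1, W y * A y + c * (L y * B y) ≤ W y * B y + c * (L y * A y) := by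
    intro y hy
    have hW : W y = ENNReal.ofReal (s / 2 * y ^ (s - 2)) * L y := by
      simp only [W, L]
      rw [← ENNReal.ofReal_mul (by have := hy.1; positivity)]
      congr 1
      rw [show s - 1 = s - 2 + 1 by ring, rpow_add_one hy.1.ne']
      ring
    have hsub : ∀ a b : ENNReal, ∀ P Q : ENNReal, a ≤ b → P ≤ Q → a * Q + b * P ≤ a * P + b * Q := by
      intro a b P Q hab hPQ
      obtain ⟨d, rfl⟩ := exists_add_of_le hab
      calc a * Q + (a + d) * P = a * Q + a * P + d * P := by ring
        _ ≤ a * Q + a * P + d * Q := by gcongr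
        _ = _ := by ring
    rw [hW, mul_assoc, mul_assoc]
    rcases lt_or_ge y y0 with h | h
    · obtain ⟨z, hz, hyz⟩ := exists_lt_of_lt_csSup (Set.insert_nonempty _ _) h
      have hz' : z ∈ Z := by
        rcases hz with rfl | hz
        · exact absurd hy.1 (not_lt.2 hyz.le)
        · exact hz
      have hBA := hcross y hy z hz'.1 hyz.le hz'.2
      apply hsub
      · apply ENNReal.ofReal_le_ofReal
        have := rpow_le_rpow hy.1.le h.le (show 0 ≤ s - 2 by linarith)
        gcongr
      · gcongr
    · rcases eq_or_lt_of_le h with h | h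
      · simp only [c]
        rw [h]
        exact (add_comm _ _).le
      · have hAB : A y ≤ B y := by
          by_contra hc
          exact absurd (le_csSup hbd (Set.mem_insert_of_mem 0 (show y ∈ Z from ⟨hy, not_le.1 hc⟩)))
            (not_le.2 h)
        refine (add_comm _ _).trans_le ((hsub _ _ _ _ ?_ ?_).trans (add_comm _ _).le)
        · apply ENNReal.ofReal_le_ofReal
          have := rpow_le_rpow hy0 h.le (show 0 ≤ s - 2 by linarith)
          gcongr
        · gcongr
  have hint := setLIntegral_mono (μ := volume) (s := Set.Ioo (0 : ℝ) 1)
    (f := fun y => W y * A y + c * (L y * B y)) (g := fun y => W y * B y + c * (L y * A y))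
    (by fun_prop) hpt
  rw [lintegral_add_left (by fun_prop), lintegral_add_left (by fun_prop),
    lintegral_const_mul' _ _ ENNReal.ofReal_ne_top, lintegral_const_mul' _ _ ENNReal.ofReal_ne_top]
    at hint
  rw [← ENNReal.add_le_add_iff_right (ENNReal.mul_ne_top ENNReal.ofReal_ne_top hfin : c * _ ≠ ⊤)]
  exact hint.trans (by gcongr)

/-- The sharp comparison of powers of the cosine with Gaussians. -/
theorem lintegral_exp_le_lintegral_cos {q s : ℝ} (hq : 7 / 8 ≤ q) (hq1 : q ≤ 1) (hs : 2 ≤ s)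
    (h2 : ∫⁻ u, ENNReal.ofReal (1 - exp (-u ^ 2)) ∂powerMeasure (2 * q) ≤
      ∫⁻ u, ENNReal.ofReal (1 - cos u ^ 2) ∂powerMeasure (2 * q))
    (hfin : ∫⁻ u, ENNReal.ofReal (1 - cos u ^ 2) ∂powerMeasure (2 * q) ≠ ⊤) :
    ∫⁻ u, ENNReal.ofReal (1 - exp (-s * u ^ 2 / 2)) ∂powerMeasure (2 * q) ≤
      ∫⁻ u, ENNReal.ofReal (1 - |cos u| ^ s) ∂powerMeasure (2 * q) := by
  have hexp : ∀ s u : ℝ, exp (-s * u ^ 2 / 2) = exp (-u ^ 2 / 2) ^ s := fun s u => by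
    rw [← exp_mul]; congr 1; ring
  have e1 : ∀ r : ℝ, 1 ≤ r → ∫⁻ u, ENNReal.ofReal (1 - exp (-r * u ^ 2 / 2)) ∂powerMeasure (2 * q) =
      ∫⁻ y in Set.Ioo (0 : ℝ) 1, ENNReal.ofReal (r * y ^ (r - 1)) *
        powerMeasure (2 * q) {u | exp (-u ^ 2 / 2) < y} := fun r hr => by
    simp_rw [hexp]
    refine lintegral_one_sub_rpow (by fun_prop) (fun u => by positivity) (fun u => ?_) hr
    rw [exp_le_one_iff]
    nlinarith [sq_nonneg u]
  have e2 : ∀ r : ℝ, 1 ≤ r → ∫⁻ u, ENNReal.ofReal (1 - |cos u| ^ r) ∂powerMeasure (2 * q) =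
      ∫⁻ y in Set.Ioo (0 : ℝ) 1, ENNReal.ofReal (r * y ^ (r - 1)) *
        powerMeasure (2 * q) {u | |cos u| < y} := fun r hr =>
    lintegral_one_sub_rpow (f := fun u => |cos u|) (by fun_prop) (fun u => abs_nonneg _)
      abs_cos_le_one hr
  have e3 := e1 2 one_le_two
  have e4 := e2 2 one_le_two
  have e5 : ∀ u : ℝ, -2 * u ^ 2 / 2 = -u ^ 2 := fun u => by ring
  simp only [e5] at e3
  simp only [rpow_two, sq_abs] at e4
  rw [show (2 : ℝ) - 1 = 1 by norm_num] at e3 e4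
  simp only [rpow_one] at e3 e4
  rw [e3, e4] at h2
  rw [e4] at hfin
  rw [e1 s (by linarith), e2 s (by linarith)]
  have hmeas : ∀ f : ℝ → ℝ, Measurable fun y => powerMeasure (2 * q) {u | f u < y} := fun f =>
    Monotone.measurable fun y z hyz => measure_mono fun u hu => lt_of_lt_of_le hu hyz
  refine lintegral_mul_rpow_le_of_single_crossing (hmeas _) (hmeas _) hs ?_ h2 hfin
  intro y hy z hz hyz h
  have hpar : ∀ y ∈ Set.Ioo (0 : ℝ) 1, cos (arccos y) = y ∧ 0 < arccos y ∧ arccos y < π / 2 :=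
    fun y hy => ⟨cos_arccos (by linarith [hy.1]) hy.2.le, arccos_pos.2 hy.2, arccos_lt_pi_div_two.2 hy.1⟩
  obtain ⟨y1, y2, y3⟩ := hpar y hy
  obtain ⟨z1, z2, z3⟩ := hpar z hz
  rw [← z1, powerMeasure_exp_lt (by linarith) z2 z3] at h
  rw [← y1, powerMeasure_exp_lt (by linarith) y2 y3]
  exact powerMeasure_single_crossing hq hq1 z2 (arccos_le_arccos hyz) y3 h

/-- The normalizing integral `∫₀^∞ (1 - cos u) u ^ (-p - 1) du`. -/
noncomputable def oneSubCosMass (p : ℝ) : ENNReal :=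
  ∫⁻ u, ENNReal.ofReal (1 - cos u) ∂powerMeasure p

theorem oneSubCosMass_ne_zero {p : ℝ} (hp : 0 < p) : oneSubCosMass p ≠ 0 := by
  have hpi := pi_pos
  have h1 : powerMeasure p (Set.Ioc (π / 2) π) ≤ oneSubCosMass p := by
    rw [← setLIntegral_one]
    refine (setLIntegral_mono (by fun_prop) fun u hu => ?_).trans (setLIntegral_le_lintegral _ _)
    rw [← ENNReal.ofReal_one]
    apply ENNReal.ofReal_le_ofReal
    have := cos_nonpos_of_pi_div_two_le_of_le hu.1.le (by linarith [hu.2])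
    linarith
  refine (lt_of_lt_of_le ?_ h1).ne'
  rw [powerMeasure_Ioc hp (by positivity) (by linarith), ENNReal.ofReal_pos]
  have : π ^ (-p) < (π / 2) ^ (-p) := rpow_lt_rpow_of_neg (by positivity) (by linarith) (by linarith)
  exact div_pos (sub_pos.2 this) hp

theorem oneSubCosMass_ne_top {p : ℝ} (hp : 0 < p) (hp2 : p < 2) : oneSubCosMass p ≠ ⊤ := by
  rw [oneSubCosMass, lintegral_powerMeasure _ _ (by fun_prop), ← Set.Ioc_union_Ioi_eq_Ioi zero_le_one]
  refine ne_top_of_le_ne_top ?_ (lintegral_union_le _ _ _)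
  refine ENNReal.add_ne_top.2 ⟨?_, ?_⟩
  · have hi : IntegrableOn (fun u : ℝ => u ^ (1 - p)) (Set.Ioc 0 1) := by
      rw [← intervalIntegrable_iff_integrableOn_Ioc_of_le zero_le_one]
      exact intervalIntegral.intervalIntegrable_rpow' (by linarith)
    refine ne_top_of_le_ne_top hi.lintegral_lt_top.ne (setLIntegral_mono (by fun_prop) fun u hu => ?_)
    rw [← ENNReal.ofReal_mul (by have := hu.1; positivity)]
    apply ENNReal.ofReal_le_ofReal
    have h1 : 1 - cos u ≤ u ^ 2 := by
      linarith [one_sub_sq_div_two_le_cos (x := u), sq_nonneg u]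
    calc u ^ (-p - 1) * (1 - cos u) ≤ u ^ (-p - 1) * u ^ 2 := by
          have := hu.1
          gcongr
      _ = u ^ (1 - p) := by
          rw [← rpow_two, ← rpow_add hu.1]
          congr 1; ring
  · have hi : IntegrableOn (fun u : ℝ => u ^ (-p - 1) * 2) (Set.Ioi 1) :=
      (integrableOn_Ioi_rpow_of_lt (by linarith) one_pos).mul_const 2
    refine ne_top_of_le_ne_top hi.lintegral_lt_top.ne (setLIntegral_mono (by fun_prop) fun u hu => ?_)
    have hu0 : 0 < u := one_pos.trans hu
    rw [← ENNReal.ofReal_mul (by positivity)]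
    apply ENNReal.ofReal_le_ofReal
    have := neg_one_le_cos u
    gcongr
    linarith

theorem lintegral_one_sub_cos_mul {p : ℝ} (hp : 0 < p) (x : ℝ) :
    ∫⁻ u, ENNReal.ofReal (1 - cos (x * u)) ∂powerMeasure p =
      ENNReal.ofReal (|x| ^ p) * oneSubCosMass p := by
  rcases eq_or_ne x 0 with rfl | hx
  · simp [zero_rpow hp.ne']
  · rw [oneSubCosMass, ← lintegral_powerMeasure_comp_mul (abs_pos.2 hx) (by fun_prop)]
    congr 1
    ext u
    rw [← cos_abs, abs_mul, ← cos_abs (|x| * u), abs_mul, abs_abs]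

/-- The absolute moment of order `2 * q` of a standard Gaussian. -/
noncomputable def gaussMoment (q : ℝ) : ℝ := 2 ^ q * Real.Gamma (q + 1 / 2) / √π

theorem gaussMoment_pos {q : ℝ} (hq : 0 < q) : 0 < gaussMoment q := by
  have := Real.Gamma_pos_of_pos (s := q + 1 / 2) (by positivity)
  unfold gaussMoment
  positivity

theorem lintegral_abs_rpow_gaussian {q : ℝ} (hq : 0 < q) :
    ∫⁻ x, ENNReal.ofReal (|x| ^ (2 * q)) ∂ProbabilityTheory.gaussianReal 0 1 =
      ENNReal.ofReal (gaussMoment q) := by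
  have h : ∫ x, |x| ^ (2 * q) ∂ProbabilityTheory.gaussianReal 0 1 = gaussMoment q := by
    rw [ProbabilityTheory.integral_gaussianReal_eq_integral_smul one_ne_zero]
    have e : ∀ x : ℝ, ProbabilityTheory.gaussianPDFReal 0 1 x • |x| ^ (2 * q) =
        (√(2 * π))⁻¹ * (|x| ^ (2 * q) * exp (-(1 / 2) * |x| ^ (2 : ℝ))) := fun x => by
      rw [ProbabilityTheory.gaussianPDFReal, smul_eq_mul, rpow_two, sq_abs]
      simp only [NNReal.coe_one, mul_one, sub_zero]
      rw [show -x ^ 2 / 2 = -(1 / 2) * x ^ 2 by ring]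
      ring
    simp_rw [e]
    rw [integral_const_mul, integral_comp_abs (f := fun x => x ^ (2 * q) * exp (-(1 / 2) * x ^ (2 : ℝ))),
      integral_rpow_mul_exp_neg_mul_rpow two_pos (by linarith) (by norm_num)]
    rw [gaussMoment, show (2 * q + 1) / 2 = q + 1 / 2 by ring,
      show -(2 * q + 1) / 2 = -(q + 1 / 2) by ring, one_div, inv_rpow zero_le_two, rpow_neg zero_le_two,
      inv_inv, rpow_add two_pos, sqrt_mul zero_le_two, sqrt_eq_rpow 2, one_div]
    have := sqrt_pos.2 pi_pos
    have : (0 : ℝ) < 2 ^ (2⁻¹ : ℝ) := by positivity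
    field_simp
  rw [← h, ofReal_integral_eq_lintegral_ofReal]
  · by_contra hc
    rw [integral_undef hc] at h
    exact (gaussMoment_pos hq).ne h
  · exact Eventually.of_forall fun x => by positivity

theorem lintegral_one_sub_cos_gaussian (x : ℝ) :
    ∫⁻ g, ENNReal.ofReal (1 - cos (g * x)) ∂ProbabilityTheory.gaussianReal 0 1 =
      ENNReal.ofReal (1 - exp (-x ^ 2 / 2)) := by
  have hi : Integrable (fun g : ℝ => Complex.exp (x * g * Complex.I))
      (ProbabilityTheory.gaussianReal 0 1) := by
    refine Integrable.of_bound (C := 1) (by fun_prop) (Eventually.of_forall fun g => ?_)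
    rw [← Complex.ofReal_mul, Complex.norm_exp_ofReal_mul_I]
  have hc : ∀ g : ℝ, (Complex.exp (x * g * Complex.I)).re = cos (g * x) := fun g => by
    rw [← Complex.ofReal_mul, Complex.exp_ofReal_mul_I_re, mul_comm]
  have h : ∫ g, cos (g * x) ∂ProbabilityTheory.gaussianReal 0 1 = exp (-x ^ 2 / 2) := by
    have h1 := ProbabilityTheory.charFun_gaussianReal (μ := 0) (v := 1) x
    rw [charFun_apply_real] at h1
    have h2 := Complex.reCLM.integral_comp_comm hi
    simp only [Complex.reCLM_apply, hc] at h2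
    rw [h2, h1, ← Complex.exp_ofReal_re]
    congr 2
    push_cast
    ring
  rw [← h, ← ofReal_integral_eq_lintegral_ofReal]
  · rw [integral_sub (integrable_const _)]
    · simp
    · exact hi.re.congr (Eventually.of_forall hc)
  · exact (integrable_const _).sub (hi.re.congr (Eventually.of_forall hc))
  · exact Eventually.of_forall fun g => sub_nonneg.2 (cos_le_one _)

theorem lintegral_one_sub_exp {q : ℝ} (hq : 0 < q) :
    ∫⁻ u, ENNReal.ofReal (1 - exp (-u ^ 2 / 2)) ∂powerMeasure (2 * q) =
      ENNReal.ofReal (gaussMoment q) * oneSubCosMass (2 * q) := by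
  simp_rw [← lintegral_one_sub_cos_gaussian]
  rw [lintegral_lintegral_swap (by fun_prop)]
  simp_rw [lintegral_one_sub_cos_mul (p := 2 * q) (by positivity)]
  rw [lintegral_mul_const _ (by fun_prop), lintegral_abs_rpow_gaussian hq]

/-- The extremal case `s = 2` of the comparison, equivalent to a bound on the Gamma function. -/
theorem lintegral_exp_le_lintegral_cos_sq {q : ℝ} (hq : 0 < q)
    (hG : Real.Gamma (q + 1 / 2) ≤ √π / 2) :
    ∫⁻ u, ENNReal.ofReal (1 - exp (-u ^ 2)) ∂powerMeasure (2 * q) ≤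
      ∫⁻ u, ENNReal.ofReal (1 - cos u ^ 2) ∂powerMeasure (2 * q) ∧
    (q < 1 → ∫⁻ u, ENNReal.ofReal (1 - cos u ^ 2) ∂powerMeasure (2 * q) ≠ ⊤) := by
  have e1 : ∫⁻ u, ENNReal.ofReal (1 - cos u ^ 2) ∂powerMeasure (2 * q) =
      ENNReal.ofReal (2 ^ (2 * q - 1)) * oneSubCosMass (2 * q) := by
    have e : ∀ u, ENNReal.ofReal (1 - cos u ^ 2) =
        ENNReal.ofReal (1 / 2) * ENNReal.ofReal (1 - cos (2 * u)) := fun u => by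
      rw [← ENNReal.ofReal_mul (by norm_num), cos_two_mul]
      congr 1; ring
    simp_rw [e]
    rw [lintegral_const_mul _ (by fun_prop), lintegral_one_sub_cos_mul (by positivity), ← mul_assoc,
      ← ENNReal.ofReal_mul (by norm_num), rpow_sub_one two_ne_zero, abs_two]
    congr 2; ring
  have e2 : ∫⁻ u, ENNReal.ofReal (1 - exp (-u ^ 2)) ∂powerMeasure (2 * q) =
      ENNReal.ofReal (2 ^ q * gaussMoment q) * oneSubCosMass (2 * q) := by
    have e : ∀ u : ℝ, ENNReal.ofReal (1 - exp (-u ^ 2)) =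
        ENNReal.ofReal (1 - exp (-(√2 * u) ^ 2 / 2)) := fun u => by
      rw [mul_pow, sq_sqrt zero_le_two, ← mul_neg, mul_div_cancel_left₀ _ two_ne_zero]
    rw [lintegral_congr e, lintegral_powerMeasure_comp_mul (f := fun u => ENNReal.ofReal (1 - exp (-u ^ 2 / 2)))
      (by positivity) (by fun_prop), lintegral_one_sub_exp hq, ← mul_assoc,
      ← ENNReal.ofReal_mul (by positivity), sqrt_eq_rpow, ← rpow_mul zero_le_two]
    congr 4; ring
  rw [e1, e2]
  refine ⟨?_, fun hq1 => ENNReal.mul_ne_top ENNReal.ofReal_ne_top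
    (oneSubCosMass_ne_top (by positivity) (by linarith))⟩
  gcongr
  rw [gaussMoment, rpow_sub_one two_ne_zero, two_mul, rpow_add two_pos]
  have h2 : (0 : ℝ) < 2 ^ q := by positivity
  have := sqrt_pos.2 pi_pos
  calc (2 : ℝ) ^ q * (2 ^ q * Real.Gamma (q + 1 / 2) / √π)
      ≤ (2 : ℝ) ^ q * (2 ^ q * (√π / 2) / √π) := by gcongr
    _ = _ := by field_simp

/-- The average of `f` over all points `c ± a₁ ± ⋯ ± aₙ`, where `a₁, …, aₙ` are the entries of the
list. -/
noncomputable def signAverage {V : Type*} [AddCommGroup V] (f : V → ℝ) : List V → V → ℝ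
  | [], c => f c
  | a :: l, c => (signAverage f l (c + a) + signAverage f l (c - a)) / 2

section signAverage

variable {V : Type*} [AddCommGroup V]

theorem signAverage_mono {f g : V → ℝ} (h : ∀ x, f x ≤ g x) :
    ∀ (l : List V) (c : V), signAverage f l c ≤ signAverage g l c
  | [], c => h c
  | a :: l, c => by
    have h1 := signAverage_mono h l (c + a)
    have h2 := signAverage_mono h l (c - a)
    simp only [signAverage]
    linarith

theorem signAverage_const (k : ℝ) :
    ∀ (l : List V) (c : V), signAverage (fun _ => k) l c = k
  | [], _ => rfl
  | a :: l, c => by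
    simp only [signAverage, signAverage_const k l]
    ring

theorem signAverage_nonneg {f : V → ℝ} (h : ∀ x, 0 ≤ f x) (l : List V) (c : V) :
    0 ≤ signAverage f l c := by
  rw [← signAverage_const 0 l c]
  exact signAverage_mono h l c

theorem signAverage_add (f g : V → ℝ) :
    ∀ (l : List V) (c : V), signAverage (fun x => f x + g x) l c =
      signAverage f l c + signAverage g l c
  | [], _ => rfl
  | a :: l, c => by
    simp only [signAverage, signAverage_add f g l]
    ring

theorem signAverage_const_mul (k : ℝ) (f : V → ℝ) :
    ∀ (l : List V) (c : V), signAverage (fun x => k * f x) l c = k * signAverage f l c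
  | [], _ => rfl
  | a :: l, c => by
    simp only [signAverage, signAverage_const_mul k f l]
    ring

theorem signAverage_sum {ι : Type*} (s : Finset ι) (f : ι → V → ℝ) (l : List V) (c : V) :
    signAverage (fun x => ∑ i ∈ s, f i x) l c = ∑ i ∈ s, signAverage (f i) l c := by
  classical
  induction s using Finset.induction_on with
  | empty => simpa using signAverage_const 0 l c
  | insert i s hi ih => simp only [Finset.sum_insert hi, signAverage_add, ih]

theorem signAverage_comp {W : Type*} [AddCommGroup W] (φ : V →+ W) (f : W → ℝ) :
    ∀ (l : List V) (c : V), signAverage (fun x => f (φ x)) l c = signAverage f (l.map φ) (φ c)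
  | [], _ => rfl
  | a :: l, c => by
    simp only [signAverage, List.map_cons, signAverage_comp φ f l, map_add, map_sub]

theorem signAverage_perm {f : V → ℝ} {l l' : List V} (h : l.Perm l') :
    ∀ c, signAverage f l c = signAverage f l' c := by
  induction h with
  | nil => exact fun _ => rfl
  | cons a _ ih => intro c; simp only [signAverage, ih]
  | swap a b l =>
    intro c
    simp only [signAverage]
    rw [add_right_comm c, sub_right_comm c, add_sub_right_comm c b a, add_sub_right_comm c a b]
    ring
  | trans _ _ ih1 ih2 => exact fun c => (ih1 c).trans (ih2 c)

theorem signAverage_neg {f : V → ℝ} (hf : ∀ x, f (-x) = f x) :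
    ∀ (l : List V) (c : V), signAverage f l (-c) = signAverage f l c
  | [], c => hf c
  | a :: l, c => by
    simp only [signAverage]
    rw [show -c + a = -(c - a) by abel, show -c - a = -(c + a) by abel, signAverage_neg hf l,
      signAverage_neg hf l]
    ring

theorem signAverage_swap {f : V → ℝ} (hf : ∀ x, f (-x) = f x) (a : V) (l : List V) (c : V) :
    signAverage f (a :: l) c = signAverage f (c :: l) a := by
  simp only [signAverage]
  rw [add_comm c a, ← signAverage_neg hf l (c - a), neg_sub]

end signAverage

theorem signAverage_cos (t : ℝ) :
    ∀ (l : List ℝ) (c : ℝ), signAverage (fun x => cos (x * t)) l c =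
      ((c :: l).map fun a => cos (a * t)).prod
  | [], c => by simp [signAverage]
  | a :: l, c => by
    simp only [signAverage, signAverage_cos t l, List.map_cons, List.prod_cons]
    rw [add_mul, sub_mul, cos_add, cos_sub]
    ring

theorem signAverage_sq : ∀ (l : List ℝ) (c : ℝ), signAverage (fun x => x ^ 2) l c =
      ((c :: l).map fun a => a ^ 2).sum
  | [], c => by simp [signAverage]
  | a :: l, c => by
    simp only [signAverage, signAverage_sq l, List.map_cons, List.sum_cons]
    ring

theorem ofReal_signAverage_mul_oneSubCosMass {p : ℝ} (hp : 0 < p) :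
    ∀ (l : List ℝ) (c : ℝ), ENNReal.ofReal (signAverage (fun x => |x| ^ p) l c) * oneSubCosMass p =
      ∫⁻ t, ENNReal.ofReal (signAverage (fun x => 1 - cos (x * t)) l c) ∂powerMeasure p
  | [], c => by simp only [signAverage, lintegral_one_sub_cos_mul hp]
  | a :: l, c => by
    have h1 : ∀ x : ℝ, 0 ≤ |x| ^ p := fun x => by positivity
    have h2 : ∀ t x : ℝ, 0 ≤ 1 - cos (x * t) := fun t x => sub_nonneg.2 (cos_le_one _)
    have hm : ∀ c, Measurable fun t =>
        ENNReal.ofReal (signAverage (fun x => 1 - cos (x * t)) l c) := by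
      intro c
      have : ∀ (l : List ℝ) (c : ℝ), Measurable fun t => signAverage (fun x => 1 - cos (x * t)) l c := by
        intro l
        induction l with
        | nil => intro c; simp only [signAverage]; fun_prop
        | cons a l ih => intro c; exact ((ih _).add (ih _)).div_const 2
      exact (this l c).ennreal_ofReal
    simp only [signAverage, add_div]
    simp_rw [ENNReal.ofReal_add (div_nonneg (signAverage_nonneg h1 _ _) zero_le_two)
      (div_nonneg (signAverage_nonneg h1 _ _) zero_le_two),
      fun t => ENNReal.ofReal_add (div_nonneg (signAverage_nonneg (h2 t) l (c + a)) zero_le_two)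
      (div_nonneg (signAverage_nonneg (h2 t) l (c - a)) zero_le_two),
      ENNReal.ofReal_div_of_pos two_pos, div_eq_mul_inv]
    rw [lintegral_add_left ((hm _).mul_const _), lintegral_mul_const _ (hm _),
      lintegral_mul_const _ (hm _), ← ofReal_signAverage_mul_oneSubCosMass hp l,
      ← ofReal_signAverage_mul_oneSubCosMass hp l]
    ring

theorem gaussMoment_mul_le_lintegral_cos {q a σ : ℝ} (hq : 7 / 8 ≤ q) (hq1 : q < 1)
    (hG : Real.Gamma (q + 1 / 2) ≤ √π / 2) (ha : a ≠ 0) (hσ : 0 < σ) (h : 2 * a ^ 2 ≤ σ ^ 2) :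
    ENNReal.ofReal (gaussMoment q * σ ^ (2 * q)) * oneSubCosMass (2 * q) ≤
      ∫⁻ t, ENNReal.ofReal (1 - |cos (a * t)| ^ (σ ^ 2 / a ^ 2)) ∂powerMeasure (2 * q) := by
  have hq0 : 0 < q := by linarith
  have ha0 : 0 < |a| := abs_pos.2 ha
  obtain ⟨h2, hfin⟩ := lintegral_exp_le_lintegral_cos_sq hq0 hG
  have hs : 2 ≤ σ ^ 2 / a ^ 2 := by rwa [le_div_iff₀ (by positivity)]
  have key := lintegral_exp_le_lintegral_cos hq hq1.le hs h2 (hfin hq1)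
  calc _ = ∫⁻ t, ENNReal.ofReal (1 - exp (-(σ * t) ^ 2 / 2)) ∂powerMeasure (2 * q) := by
        rw [lintegral_powerMeasure_comp_mul (f := fun u => ENNReal.ofReal (1 - exp (-u ^ 2 / 2))) hσ
          (by fun_prop), lintegral_one_sub_exp hq0, mul_comm (gaussMoment q),
          ENNReal.ofReal_mul (by positivity), mul_assoc]
    _ = ∫⁻ t, ENNReal.ofReal (1 - exp (-(σ ^ 2 / a ^ 2) * (|a| * t) ^ 2 / 2))
          ∂powerMeasure (2 * q) := by
        congr 1; ext t
        rw [mul_pow |a|, sq_abs]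
        congr 4
        field_simp
    _ = ENNReal.ofReal (|a| ^ (2 * q)) * ∫⁻ t, ENNReal.ofReal (1 - exp (-(σ ^ 2 / a ^ 2) * t ^ 2 / 2))
          ∂powerMeasure (2 * q) :=
        lintegral_powerMeasure_comp_mul
          (f := fun u => ENNReal.ofReal (1 - exp (-(σ ^ 2 / a ^ 2) * u ^ 2 / 2))) ha0 (by fun_prop)
    _ ≤ ENNReal.ofReal (|a| ^ (2 * q)) * ∫⁻ t, ENNReal.ofReal (1 - |cos t| ^ (σ ^ 2 / a ^ 2))
          ∂powerMeasure (2 * q) := by gcongr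
    _ = _ := by
        rw [← lintegral_powerMeasure_comp_mul ha0 (by fun_prop)]
        congr 1; ext t
        rw [← cos_abs (a * t), ← cos_abs (|a| * t), abs_mul a, abs_mul |a|, abs_abs]

theorem one_sub_prod_cos_ge (l : List ℝ) {σ : ℝ} (hσ : 0 < σ)
    (hsum : (l.map fun a => a ^ 2).sum = σ ^ 2) (t : ℝ) :
    ∑ i : Fin l.length, l[i] ^ 2 / σ ^ 2 * (1 - |cos (l[i] * t)| ^ (σ ^ 2 / l[i] ^ 2)) ≤
      1 - (l.map fun a => cos (a * t)).prod := by
  have hw : ∑ i : Fin l.length, l[i] ^ 2 / σ ^ 2 = 1 := by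
    rw [← Finset.sum_div, ← Fin.sum_univ_fun_getElem l (fun a => a ^ 2)] at *
    simp only [Fin.getElem_fin] at *
    rw [hsum, div_self (by positivity)]
  have h := Real.geom_mean_le_arith_mean_weighted Finset.univ
    (fun i : Fin l.length => l[i] ^ 2 / σ ^ 2) (fun i => |cos (l[i] * t)| ^ (σ ^ 2 / l[i] ^ 2))
    (fun i _ => by positivity) hw (fun i _ => by positivity)
  have e : ∀ i : Fin l.length, (|cos (l[i] * t)| ^ (σ ^ 2 / l[i] ^ 2)) ^ (l[i] ^ 2 / σ ^ 2) =
      |cos (l[i] * t)| := by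
    intro i
    rw [← rpow_mul (abs_nonneg _)]
    by_cases h0 : l[i] = 0
    · simp [h0]
    · rw [div_mul_div_cancel₀' (by positivity), div_self (by positivity), rpow_one]
  simp only [e] at h
  rw [← Finset.abs_prod] at h
  have e2 : (l.map fun a => cos (a * t)).prod = ∏ i : Fin l.length, cos (l[i] * t) :=
    (Fin.prod_univ_fun_getElem l (fun a => cos (a * t))).symm
  simp only [mul_sub, mul_one, Finset.sum_sub_distrib]
  rw [hw, e2]
  linarith [le_abs_self (∏ i : Fin l.length, cos (l[i] * t))]

/-- Khintchine with the Gaussian constant, when no coefficient carries more than half of the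
variance. -/
theorem gaussMoment_mul_le_signAverage {q σ : ℝ} (hq : 7 / 8 ≤ q) (hq1 : q < 1)
    (hG : Real.Gamma (q + 1 / 2) ≤ √π / 2) (l : List ℝ) (c : ℝ) (hσ : 0 < σ)
    (hsum : ((c :: l).map fun a => a ^ 2).sum = σ ^ 2) (hl : ∀ a ∈ c :: l, 2 * a ^ 2 ≤ σ ^ 2) :
    gaussMoment q * σ ^ (2 * q) ≤ signAverage (fun x => |x| ^ (2 * q)) l c := by
  have hq0 : 0 < q := by linarith
  have hK := oneSubCosMass_ne_top (p := 2 * q) (by positivity) (by linarith)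
  have hK0 := oneSubCosMass_ne_zero (p := 2 * q) (by positivity)
  rw [← ENNReal.ofReal_le_ofReal_iff (signAverage_nonneg (fun x => by positivity) _ _),
    ← ENNReal.mul_le_mul_iff_left hK0 hK, ofReal_signAverage_mul_oneSubCosMass (by positivity)]
  have e : ∀ t, signAverage (fun x => 1 - cos (x * t)) l c =
      1 - ((c :: l).map fun a => cos (a * t)).prod := fun t => by
    have := signAverage_add (fun _ => 1) (fun x => (-1) * cos (x * t)) l c
    rw [signAverage_const, signAverage_const_mul, signAverage_cos] at this
    rw [sub_eq_add_neg, ← neg_one_mul, ← this]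
    congr 1; ext x; ring
  simp only [e]
  generalize c :: l = m at hsum hl
  have hle : ∀ a t : ℝ, 0 ≤ 1 - |cos (a * t)| ^ (σ ^ 2 / a ^ 2) := fun a t =>
    sub_nonneg.2 (rpow_le_one (abs_nonneg _) (abs_cos_le_one _) (by positivity))
  calc _ = ∑ i : Fin m.length, ENNReal.ofReal (m[i] ^ 2 / σ ^ 2) *
        (ENNReal.ofReal (gaussMoment q * σ ^ (2 * q)) * oneSubCosMass (2 * q)) := by
        rw [← Finset.sum_mul, ← ENNReal.ofReal_sum_of_nonneg (fun i _ => by positivity),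
          ← Finset.sum_div]
        have := Fin.sum_univ_fun_getElem m (fun a => a ^ 2)
        simp only [Fin.getElem_fin] at *
        rw [this, hsum, div_self (by positivity), ENNReal.ofReal_one, one_mul]
    _ ≤ ∑ i : Fin m.length, ENNReal.ofReal (m[i] ^ 2 / σ ^ 2) *
        ∫⁻ t, ENNReal.ofReal (1 - |cos (m[i] * t)| ^ (σ ^ 2 / m[i] ^ 2)) ∂powerMeasure (2 * q) := by
        refine Finset.sum_le_sum fun i _ => ?_
        by_cases h0 : m[i] = 0
        · simp [h0]
        · gcongr
          exact gaussMoment_mul_le_lintegral_cos hq hq1 hG h0 hσ (hl _ (List.getElem_mem _))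
    _ = ∫⁻ t, ∑ i : Fin m.length, ENNReal.ofReal (m[i] ^ 2 / σ ^ 2) *
        ENNReal.ofReal (1 - |cos (m[i] * t)| ^ (σ ^ 2 / m[i] ^ 2)) ∂powerMeasure (2 * q) := by
        rw [lintegral_finsetSum _ (fun i _ => by fun_prop)]
        simp_rw [lintegral_const_mul' _ _ ENNReal.ofReal_ne_top]
    _ ≤ _ := by
        refine lintegral_mono fun t => ?_
        have hw : ∀ a : ℝ, 0 ≤ a ^ 2 / σ ^ 2 := fun a => by positivity
        simp only [← ENNReal.ofReal_mul (hw _)]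
        rw [← ENNReal.ofReal_sum_of_nonneg
          (fun i _ => mul_nonneg (by positivity) (hle _ _))]
        exact ENNReal.ofReal_le_ofReal (one_sub_prod_cos_ge m hσ hsum t)

theorem rpow_add_rpow_le_of_between {q a b c d : ℝ} (hq : 0 ≤ q) (hq1 : q ≤ 1) (ha : 0 ≤ a)
    (hab : a ≤ b) (hac : a ≤ c) (h : a + d = b + c) : a ^ q + d ^ q ≤ b ^ q + c ^ q := by
  rcases eq_or_lt_of_le (show a ≤ d by linarith) with hd | hd
  · rw [show b = a by linarith, show c = d by linarith]
  have hda : 0 < d - a := sub_pos.2 hd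
  have key : ∀ x, a ≤ x → x ≤ d → (d - x) / (d - a) * a ^ q + (x - a) / (d - a) * d ^ q ≤ x ^ q := by
    intro x h1 h2
    have := (concaveOn_rpow hq hq1).2 (show a ∈ Set.Ici 0 from ha) (show d ∈ Set.Ici 0 from ha.trans hd.le)
      (show 0 ≤ (d - x) / (d - a) from div_nonneg (by linarith) hda.le)
      (show 0 ≤ (x - a) / (d - a) from div_nonneg (by linarith) hda.le) (by field_simp; ring)
    simp only [smul_eq_mul] at this
    rwa [show (d - x) / (d - a) * a + (x - a) / (d - a) * d = x by
      rw [div_mul_eq_mul_div, div_mul_eq_mul_div, ← add_div, div_eq_iff hda.ne']; ring] at this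
  have h1 := key b hab (by linarith)
  have h2 := key c hac (by linarith)
  have e : d = b + c - a := by linarith
  have e1 : (d - b) / (d - a) + (d - c) / (d - a) = 1 := by
    rw [← add_div, div_eq_one_iff_eq hda.ne']; linarith
  have e2 : (b - a) / (d - a) + (c - a) / (d - a) = 1 := by
    rw [← add_div, div_eq_one_iff_eq hda.ne']; linarith
  nlinarith [congrArg (· * a ^ q) e1, congrArg (· * d ^ q) e2]

/-- A function vanishing to second order at `0` and vanishing at `1`, whose second derivative is
`x * h x` with `h` antitone, is nonnegative in between. -/
theorem nonneg_of_second_deriv_antitone {F F' h : ℝ → ℝ} (h0 : F 0 = 0) (h1 : F 1 = 0)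
    (hF'0 : F' 0 = 0) (hc : ContinuousOn F (Set.Icc 0 1)) (hc' : ContinuousOn F' (Set.Ico 0 1))
    (hd : ∀ x ∈ Set.Ioo (0 : ℝ) 1, HasDerivAt F (F' x) x)
    (hd' : ∀ x ∈ Set.Ioo (0 : ℝ) 1, HasDerivAt F' (x * h x) x)
    (hanti : ∀ x y, 0 < x → x ≤ y → y < 1 → h y ≤ h x) {b : ℝ} (hb0 : 0 ≤ b) (hb1 : b ≤ 1) :
    0 ≤ F b := by
  by_contra! hneg
  have hb0 : 0 < b := hb0.lt_of_ne fun hb => by rw [← hb, h0] at hneg; exact lt_irrefl _ hneg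
  have hb1 : b < 1 := hb1.lt_of_ne fun hb => by rw [hb, h1] at hneg; exact lt_irrefl _ hneg
  obtain ⟨x, hx, ex⟩ := exists_hasDerivAt_eq_slope F F' hb0 (hc.mono (Set.Icc_subset_Icc_right hb1.le))
    fun y hy => hd y ⟨hy.1, hy.2.trans hb1⟩
  obtain ⟨y, hy, ey⟩ := exists_hasDerivAt_eq_slope F F' hb1 (hc.mono (Set.Icc_subset_Icc_left hb0.le))
    fun y hy => hd y ⟨hb0.trans hy.1, hy.2⟩
  have hx' : F' x < 0 := by rw [ex, h0]; exact div_neg_of_neg_of_pos (by linarith) (by linarith)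
  have hy' : 0 < F' y := by rw [ey, h1]; exact div_pos (by linarith) (by linarith)
  have hxy : x < y := hx.2.trans hy.1
  obtain ⟨u, hu, eu⟩ := exists_hasDerivAt_eq_slope F' (fun x => x * h x) hx.1
    (hc'.mono fun z hz => ⟨hz.1, hz.2.trans_lt (hx.2.trans hb1)⟩)
    fun z hz => hd' z ⟨hz.1, hz.2.trans (hx.2.trans hb1)⟩
  obtain ⟨v, hv, ev⟩ := exists_hasDerivAt_eq_slope F' (fun x => x * h x) hxy
    (hc'.mono fun z hz => ⟨hx.1.le.trans hz.1, hz.2.trans_lt hy.2⟩)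
    fun z hz => hd' z ⟨hx.1.trans hz.1, hz.2.trans hy.2⟩
  have hu' : u * h u < 0 := by rw [eu, hF'0]; exact div_neg_of_neg_of_pos (by linarith) (by linarith [hx.1])
  have hv' : 0 < v * h v := by rw [ev]; exact div_pos (by linarith) (by linarith)
  have hu0 : 0 < u := hu.1
  have hv0 : 0 < v := hx.1.trans hv.1
  have := hanti u v hu0 (hu.2.trans hv.1).le (hv.2.trans hy.2)
  nlinarith [(pos_iff_pos_of_mul_pos hv').1 hv0, mul_pos hu0 ((pos_iff_pos_of_mul_pos hv').1 hv0)]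

theorem rpow_sub_rpow_le_chord {r b : ℝ} (hr : 0 < r) (hr1 : r ≤ 1) (hb0 : 0 ≤ b) (hb1 : b ≤ 1) :
    (1 + b) ^ r - (1 - b) ^ r ≤ 2 * b * ((1 - b ^ 2) * r + b ^ 2 * 2 ^ (r - 1)) := by
  have hp : ∀ s : ℝ, ∀ x ∈ Set.Ioo (-1 : ℝ) 1, HasDerivAt (fun x => (1 + x) ^ s) (s * (1 + x) ^ (s - 1)) x ∧
      HasDerivAt (fun x => (1 - x) ^ s) (-s * (1 - x) ^ (s - 1)) x := fun s x hx => by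
    constructor
    · refine (((hasDerivAt_id x).const_add 1).rpow_const (Or.inl ?_)).congr_deriv ?_
      · have : 0 < 1 + x := by linarith [hx.1]
        simpa using this.ne'
      · simp
    · refine (((hasDerivAt_id x).const_sub 1).rpow_const (Or.inl ?_)).congr_deriv ?_
      · have : 0 < 1 - x := by linarith [hx.2]
        simpa using this.ne'
      · simp
  have h2r : (2 : ℝ) * 2 ^ (r - 1) = 2 ^ r := by rw [rpow_sub_one two_ne_zero]; ring
  have hmem : ∀ x ∈ Set.Ico (0 : ℝ) 1, x ∈ Set.Ioo (-1 : ℝ) 1 := fun x hx => ⟨by linarith [hx.1], hx.2⟩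
  have h := nonneg_of_second_deriv_antitone
    (F := fun x => 2 * r * x + (2 ^ r - 2 * r) * x ^ 3 - ((1 + x) ^ r - (1 - x) ^ r))
    (F' := fun x => 2 * r + (2 ^ r - 2 * r) * (3 * x ^ 2) -
      (r * (1 + x) ^ (r - 1) - -r * (1 - x) ^ (r - 1)))
    (h := fun x => 6 * (2 ^ r - 2 * r) -
      r * (1 - r) * (((1 - x) ^ (-(2 - r)) - (1 + x) ^ (-(2 - r))) / x))
    (by simp) (by norm_num [zero_rpow hr.ne']) (by simp; ring) ?_ ?_ ?_ ?_ ?_ hb0 hb1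
  · rw [show 2 * b * ((1 - b ^ 2) * r + b ^ 2 * 2 ^ (r - 1)) =
      2 * r * b + (2 * 2 ^ (r - 1) - 2 * r) * b ^ 3 by ring, h2r]
    exact sub_nonneg.1 h
  · apply Continuous.continuousOn
    have : ∀ s : ℝ, 0 ≤ s → Continuous fun x : ℝ => x ^ s := fun s hs => continuous_rpow_const hs
    have h3 := (this r hr.le).comp (continuous_const_add (1 : ℝ))
    have h4 := (this r hr.le).comp (continuous_sub_left (1 : ℝ))
    exact (by fun_prop : Continuous fun x : ℝ => 2 * r * x + (2 ^ r - 2 * r) * x ^ 3).sub (h3.sub h4)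
  · intro x hx
    refine ContinuousAt.continuousWithinAt ?_
    obtain ⟨h5, h6⟩ := hp (r - 1) x (hmem x hx)
    exact (by fun_prop : ContinuousAt (fun x : ℝ => 2 * r + (2 ^ r - 2 * r) * (3 * x ^ 2)) x).sub
      ((h5.continuousAt.const_mul _).sub (h6.continuousAt.const_mul _))
  · intro x hx
    obtain ⟨h5, h6⟩ := hp r x (hmem x ⟨hx.1.le, hx.2⟩)
    refine ((((hasDerivAt_id x).const_mul (2 * r)).add
      (((hasDerivAt_id x).pow 3).const_mul (2 ^ r - 2 * r))).sub (h5.sub h6)).congr_deriv ?_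
    simp
  · intro x hx
    obtain ⟨h5, h6⟩ := hp (r - 1) x (hmem x ⟨hx.1.le, hx.2⟩)
    have hx0 := hx.1.ne'
    refine (((hasDerivAt_const x (2 * r)).add
      ((((hasDerivAt_id x).pow 2).const_mul 3).const_mul (2 ^ r - 2 * r))).sub
      ((h5.const_mul r).sub (h6.const_mul (-r)))).congr_deriv ?_
    rw [show r - 1 - 1 = -(2 - r) by ring]
    simp
    field_simp
    ring
  · intro x y hx hxy hy
    have h7 := rpow_neg_gap_ratio (p := 2 - r) (c := 1) (by linarith) hx hxy hy
    have hy0 : 0 < y := hx.trans_le hxy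
    have h8 : ((1 - x) ^ (-(2 - r)) - (1 + x) ^ (-(2 - r))) / x ≤
        ((1 - y) ^ (-(2 - r)) - (1 + y) ^ (-(2 - r))) / y := by
      rw [le_div_iff₀ hy0]
      calc _ = y / x * ((1 - x) ^ (-(2 - r)) - (1 + x) ^ (-(2 - r))) := by ring
        _ ≤ _ := h7
    have h9 : 0 ≤ r * (1 - r) := mul_nonneg hr.le (by linarith)
    gcongr

/-- The power `(1 + x) ^ q`, with the part on `x ≤ 1` replaced by its point reflection, which is
convex. -/
noncomputable def reflectedPow (q x : ℝ) : ℝ :=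
  if 1 ≤ x then (1 + x) ^ q else 2 ^ (q + 1) - (3 - x) ^ q

theorem reflectedPow_of_one_le {q x : ℝ} (hx : 1 ≤ x) : reflectedPow q x = (1 + x) ^ q := if_pos hx

theorem reflectedPow_of_le_one {q x : ℝ} (hx : x ≤ 1) :
    reflectedPow q x = 2 * 2 ^ q - (3 - x) ^ q := by
  have h2 : (2 : ℝ) ^ (q + 1) = 2 * 2 ^ q := by rw [rpow_add_one two_ne_zero, mul_comm]
  rcases hx.eq_or_lt with rfl | hx
  · rw [reflectedPow_of_one_le le_rfl]; norm_num; ring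
  · rw [reflectedPow, if_neg (not_le.2 hx), h2]

theorem one_add_rpow_le_reflectedPow {q x : ℝ} (hq : 0 ≤ q) (hq1 : q ≤ 1) (hx : 0 ≤ x) :
    (1 + x) ^ q ≤ reflectedPow q x := by
  rcases le_total 1 x with h | h
  · rw [reflectedPow_of_one_le h]
  · rw [reflectedPow_of_le_one h]
    have := rpow_add_rpow_le_of_between (a := 1 + x) (b := 2) (c := 2) (d := 3 - x) hq hq1
      (by linarith) (by linarith) (by linarith) (by ring)
    linarith

theorem two_mul_reflectedPow_le {q x h : ℝ} (hq : 0 ≤ q) (hq1 : q ≤ 1) (hx1 : x ≤ 1)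
    (hh : 0 ≤ h) (hhx : h ≤ x) :
    2 * reflectedPow q x ≤ reflectedPow q (x + h) + reflectedPow q (x - h) := by
  rw [reflectedPow_of_le_one hx1, reflectedPow_of_le_one (x := x - h) (by linarith)]
  rcases le_total (x + h) 1 with h1 | h1
  · rw [reflectedPow_of_le_one h1]
    have := rpow_add_rpow_le_of_between (a := 3 - (x + h)) (b := 3 - x) (c := 3 - x)
      (d := 3 - (x - h)) hq hq1 (by linarith) (by linarith) (by linarith) (by ring)
    linarith
  · rw [reflectedPow_of_one_le h1]
    have h2 := rpow_add_rpow_le_of_between (a := 2) (b := 1 + (x + h)) (c := 4 - 2 * x)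
      (d := 3 - (x - h)) hq hq1 (by linarith) (by linarith) (by linarith) (by ring)
    have h3 := rpow_add_rpow_le_of_between (a := 2) (b := 3 - x) (c := 3 - x)
      (d := 4 - 2 * x) hq hq1 (by linarith) (by linarith) (by linarith) (by ring)
    linarith

theorem chord_le_rpow_neg {ε x : ℝ} (hε : 0 ≤ ε) (hε1 : ε ≤ 1) (hx1 : x ≤ 1) :
    (1 - x) * (1 - 2 * ε) + x * 4 ^ (-ε) ≤ (6 - 2 * x) ^ (-ε) := by
  have hu : 1 - 1.4 * ε ≤ (4 : ℝ) ^ (-ε) := by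
    rw [rpow_def_of_pos (by norm_num)]
    have h4 : log 4 = 2 * log 2 := by
      rw [show (4 : ℝ) = 2 ^ 2 by norm_num, log_pow]; norm_num
    have := add_one_le_exp (log 4 * -ε)
    rw [h4] at *
    nlinarith [log_two_lt_d9]
  have hs : 0 ≤ (1 - x) / 2 := by linarith
  have hb : 1 - ε * ((1 - x) / 2) ≤ (1 + (1 - x) / 2) ^ (-ε) := by
    have h := rpow_one_add_le_one_add_mul_self (show -1 ≤ (1 - x) / 2 by linarith) hε hε1
    rw [rpow_neg (by linarith)]
    have hp : 0 < (1 + (1 - x) / 2) ^ ε := by positivity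
    refine le_trans ?_ (inv_anti₀ hp h)
    rw [← one_div, le_div_iff₀ (by positivity)]
    nlinarith [sq_nonneg (ε * ((1 - x) / 2))]
  rw [show 6 - 2 * x = 4 * (1 + (1 - x) / 2) by ring, mul_rpow (by norm_num) (by linarith)]
  have hu0 : (0 : ℝ) < 4 ^ (-ε) := by positivity
  have h1 : 1 - 2 * ε ≤ 4 ^ (-ε) * (1 - ε / 2) := by nlinarith
  have h2 := mul_le_mul_of_nonneg_left hb hu0.le
  nlinarith

theorem two_point_khintchine {q b : ℝ} (hq : 1 / 2 < q) (hq1 : q ≤ 1) (hb0 : 0 ≤ b) (hb1 : b ≤ 1) :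
    2 ^ q * reflectedPow q (b ^ 2) ≤ (1 + b) ^ (2 * q) + (1 - b) ^ (2 * q) := by
  rw [reflectedPow_of_le_one (by nlinarith)]
  have hanti : AntitoneOn (fun b : ℝ => (1 + b) ^ (2 * q) + (1 - b) ^ (2 * q) -
      2 ^ q * (2 * 2 ^ q - (3 - b ^ 2) ^ q)) (Set.Icc 0 1) := by
    refine antitoneOn_of_hasDerivWithinAt_nonpos (convex_Icc 0 1) (f' := fun b =>
      (2 * q) * (1 + b) ^ (2 * q - 1) + -(2 * q * (1 - b) ^ (2 * q - 1)) -
        2 ^ q * (2 * b * q * (3 - b ^ 2) ^ (q - 1))) ?_ ?_ ?_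
    · apply Continuous.continuousOn
      have hc : ∀ s : ℝ, 0 ≤ s → Continuous fun x : ℝ => x ^ s := fun s hs => continuous_rpow_const hs
      have h3 := (hc (2 * q) (by linarith)).comp (continuous_const_add (1 : ℝ))
      have h4 := (hc (2 * q) (by linarith)).comp (continuous_sub_left (1 : ℝ))
      have h5 := (hc q (by linarith)).comp (by fun_prop : Continuous fun x : ℝ => 3 - x ^ 2)
      exact (h3.add h4).sub ((continuous_const.sub h5).const_mul _)
    · intro x hx
      rw [interior_Icc] at hx
      have h1 : (1 : ℝ) + x ≠ 0 := by linarith [hx.1]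
      have h2 : (1 : ℝ) - x ≠ 0 := by linarith [hx.2]
      have h3 : (3 : ℝ) - x ^ 2 ≠ 0 := by nlinarith [hx.1, hx.2]
      refine HasDerivAt.hasDerivWithinAt ?_
      refine (((((hasDerivAt_id x).const_add 1).rpow_const (Or.inl h1)).add
        (((hasDerivAt_id x).const_sub 1).rpow_const (Or.inl h2))).sub
        (((((hasDerivAt_id x).pow 2).const_sub 3).rpow_const (Or.inl h3)).const_sub
          (2 * 2 ^ q) |>.const_mul (2 ^ q))).congr_deriv ?_
      simp
    · intro x hx
      rw [interior_Icc] at hx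
      have h1 := rpow_sub_rpow_le_chord (r := 2 * q - 1) (by linarith) (by linarith) hx.1.le hx.2.le
      have h2 := chord_le_rpow_neg (ε := 1 - q) (x := x ^ 2) (by linarith) (by linarith)
        (by nlinarith [hx.1, hx.2])
      have e1 : (2 : ℝ) ^ (2 * q - 1 - 1) = 4 ^ (-(1 - q)) := by
        rw [show (4 : ℝ) = 2 ^ (2 : ℝ) by norm_num, ← rpow_mul zero_le_two]; congr 1; ring
      have e2 : 2 * (6 - 2 * x ^ 2) ^ (-(1 - q)) = 2 ^ q * (3 - x ^ 2) ^ (q - 1) := by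
        rw [show 6 - 2 * x ^ 2 = 2 * (3 - x ^ 2) by ring,
          mul_rpow zero_le_two (by nlinarith [hx.1, hx.2]), ← mul_assoc, neg_sub,
          rpow_sub_one two_ne_zero]
        ring
      rw [e1] at h1
      have h3 := mul_le_mul_of_nonneg_left h2 hx.1.le
      have h4 : (1 + x) ^ (2 * q - 1) - (1 - x) ^ (2 * q - 1) ≤
          x * (2 ^ q * (3 - x ^ 2) ^ (q - 1)) := by rw [← e2]; nlinarith
      nlinarith
  have := hanti ⟨hb0, hb1⟩ ⟨zero_le_one, le_rfl⟩ hb1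
  have e : (2 : ℝ) ^ (2 * q) = 2 ^ q * 2 ^ q := by rw [two_mul, rpow_add two_pos]
  norm_num [zero_rpow (show 2 * q ≠ 0 by linarith)] at this
  rw [e] at this
  linarith

theorem gaussMoment_le {q : ℝ} (hG : Real.Gamma (q + 1 / 2) ≤ √π / 2) :
    gaussMoment q ≤ 2 ^ q / 2 := by
  have hpi : 0 < √π := by positivity
  rw [gaussMoment, div_le_iff₀ hpi]
  have := mul_le_mul_of_nonneg_left hG (rpow_nonneg zero_le_two q)
  linarith

theorem signAverage_map_mul (r b : ℝ) (l : List ℝ) (c : ℝ) :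
    signAverage (fun x => |x| ^ r) (l.map (b * ·)) (b * c) =
      |b| ^ r * signAverage (fun x => |x| ^ r) l c := by
  rw [← signAverage_const_mul]
  simp only [← mul_rpow (abs_nonneg _) (abs_nonneg _), ← abs_mul]
  exact (signAverage_comp (AddMonoidHom.mulLeft b) (fun x => |x| ^ r) l c).symm

theorem sum_map_sq_nonneg (l : List ℝ) : 0 ≤ (l.map fun a => a ^ 2).sum :=
  List.sum_nonneg (by simp only [List.mem_map]; rintro _ ⟨a, -, rfl⟩; positivity)

theorem gaussMoment_mul_reflectedPow_le_signAverage_singleton {q : ℝ} (hq : 1 / 2 < q) (hq1 : q < 1)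
    (hG : Real.Gamma (q + 1 / 2) ≤ √π / 2) {b : ℝ} (hb : b ^ 2 ≤ 1) :
    gaussMoment q * reflectedPow q (b ^ 2) ≤ signAverage (fun x => |x| ^ (2 * q)) [b] 1 := by
  have hb1 : |b| ≤ 1 := (sq_le_one_iff_abs_le_one b).1 hb
  have h := two_point_khintchine hq hq1.le (abs_nonneg b) hb1
  rw [sq_abs] at h
  have h0 : 0 ≤ reflectedPow q (b ^ 2) :=
    le_trans (by positivity) (one_add_rpow_le_reflectedPow (by linarith) hq1.le (sq_nonneg b))
  have e : signAverage (fun x => |x| ^ (2 * q)) [b] 1 =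
      ((1 + |b|) ^ (2 * q) + (1 - |b|) ^ (2 * q)) / 2 := by
    simp only [signAverage]
    rcases abs_cases b with ⟨h, _⟩ | ⟨h, _⟩ <;> rw [h] at hb1 ⊢
    · rw [abs_of_nonneg (by linarith), abs_of_nonneg (by linarith)]
    · rw [abs_of_nonneg (a := 1 + b) (by linarith), abs_of_nonneg (by linarith), sub_neg_eq_add,
        ← sub_eq_add_neg, add_comm ((1 + b) ^ _)]
  rw [e]
  have := mul_le_mul_of_nonneg_right (gaussMoment_le hG) h0
  linarith

theorem gaussMoment_mul_reflectedPow_le_signAverage {q : ℝ} (hq : 7 / 8 ≤ q) (hq1 : q < 1)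
    (hG : Real.Gamma (q + 1 / 2) ≤ √π / 2) (n : ℕ) : ∀ l : List ℝ, l.length = n →
    gaussMoment q * reflectedPow q (l.map fun a => a ^ 2).sum ≤
      signAverage (fun x => |x| ^ (2 * q)) l 1 := by
  have hγ : 0 ≤ gaussMoment q := (gaussMoment_pos (by linarith)).le
  have hq0 : 0 < q := by linarith
  have large : ∀ n, (∀ l : List ℝ, l.length = n → (l.map fun a => a ^ 2).sum ≤ 1 →
      gaussMoment q * reflectedPow q (l.map fun a => a ^ 2).sum ≤
        signAverage (fun x => |x| ^ (2 * q)) l 1) → ∀ l : List ℝ, l.length = n →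
      gaussMoment q * reflectedPow q (l.map fun a => a ^ 2).sum ≤
        signAverage (fun x => |x| ^ (2 * q)) l 1 := by
    intro n small l hl
    rcases le_or_gt (l.map fun a => a ^ 2).sum 1 with hx | hx
    · exact small l hl hx
    rw [reflectedPow_of_one_le hx.le]
    by_cases hall : ∀ b ∈ l, 2 * b ^ 2 ≤ 1 + (l.map fun a => a ^ 2).sum
    · have h0 : 0 < 1 + (l.map fun a => a ^ 2).sum := by linarith
      have hs : √(1 + (l.map fun a => a ^ 2).sum) ^ 2 = 1 + (l.map fun a => a ^ 2).sum :=
        sq_sqrt h0.le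
      have := gaussMoment_mul_le_signAverage hq hq1 hG l 1 (sqrt_pos.2 h0)
        (by rw [hs]; simp) (by
          rw [hs]
          intro a ha
          rcases List.mem_cons.1 ha with rfl | ha
          · linarith
          · exact hall a ha)
      rwa [rpow_mul (sqrt_nonneg _), rpow_two, hs] at this
    · push Not at hall
      obtain ⟨b, hb, hbx⟩ := hall
      obtain ⟨l', hl'⟩ : ∃ l', l.Perm (b :: l') := ⟨_, List.perm_cons_erase hb⟩
      have hb0 : b ≠ 0 := by rintro rfl; norm_num at hbx; linarith
      have hb2 : 0 < b ^ 2 := by positivity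
      have hsum : (l.map fun a => a ^ 2).sum = b ^ 2 + (l'.map fun a => a ^ 2).sum := by
        rw [(hl'.map _).sum_eq]; simp
      have hdiv : (((1 :: l').map (b⁻¹ * ·)).map fun a => a ^ 2).sum =
          (1 + (l.map fun a => a ^ 2).sum) / b ^ 2 - 1 := by
        rw [List.map_map, show (fun a : ℝ => a ^ 2) ∘ (b⁻¹ * ·) = fun a => (b⁻¹) ^ 2 * a ^ 2 by
          ext; simp [mul_pow], List.sum_map_mul_left, hsum]
        simp
        field_simp
        ring
      have hlen : ((1 :: l').map (b⁻¹ * ·)).length = n := by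
        rw [← hl, hl'.length_eq]; simp
      have h1 := small _ hlen (by rw [hdiv, sub_le_iff_le_add, div_le_iff₀ hb2]; linarith)
      have hdiv0 : 0 ≤ (1 + (l.map fun a => a ^ 2).sum) / b ^ 2 - 1 := by
        rw [← hdiv]; exact sum_map_sq_nonneg _
      have h2 := one_add_rpow_le_reflectedPow hq0.le hq1.le hdiv0
      have hb' : 0 < |b| ^ (2 * q) := by positivity
      rw [signAverage_perm hl', signAverage_swap (fun x => by rw [abs_neg])]
      have e := signAverage_map_mul (2 * q) b ((1 :: l').map (b⁻¹ * ·)) 1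
      rw [List.map_map, mul_one, show (b * ·) ∘ (b⁻¹ * ·) = id by
        ext; simp [hb0], List.map_id] at e
      rw [e]
      rw [hdiv] at h1
      have hpow : |b| ^ (2 * q) = (b ^ 2) ^ q := by rw [rpow_mul (abs_nonneg _), rpow_two, sq_abs]
      calc _ = |b| ^ (2 * q) * (gaussMoment q *
            (1 + ((1 + (l.map fun a => a ^ 2).sum) / b ^ 2 - 1)) ^ q) := by
            rw [add_sub_cancel, hpow, div_rpow (by linarith) hb2.le]
            field_simp
        _ ≤ |b| ^ (2 * q) * (gaussMoment q *
            reflectedPow q ((1 + (l.map fun a => a ^ 2).sum) / b ^ 2 - 1)) := by gcongr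
        _ ≤ _ := by gcongr
  induction n with
  | zero =>
    refine large 0 fun l hl _ => ?_
    rw [List.length_eq_zero_iff.1 hl]
    have := gaussMoment_mul_reflectedPow_le_signAverage_singleton (by linarith) hq1 hG
      (b := 0) (by norm_num)
    simpa [signAverage] using this
  | succ n ih =>
    refine large (n + 1) fun l hl hx => ?_
    match l, hl, hx with
    | [b], _, hx =>
      have := gaussMoment_mul_reflectedPow_le_signAverage_singleton (by linarith) hq1 hG
        (b := b) (by simpa using hx)
      simpa using this
    | a :: b :: l, hl, hx =>
      have h1 := ih ((a + b) :: l) (by simpa using hl)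
      have h2 := ih ((a - b) :: l) (by simpa using hl)
      have hl0 := sum_map_sq_nonneg l
      simp only [List.map_cons, List.sum_cons] at h1 h2 hx ⊢
      generalize (l.map fun a => a ^ 2).sum = s at *
      have key : 2 * reflectedPow q (a ^ 2 + (b ^ 2 + s)) ≤
          reflectedPow q ((a + b) ^ 2 + s) + reflectedPow q ((a - b) ^ 2 + s) := by
        rcases le_total 0 (a * b) with hab | hab
        · have := two_mul_reflectedPow_le hq0.le hq1.le hx (h := 2 * (a * b)) (by linarith)
            (by nlinarith [sq_nonneg (a - b)])
          convert this using 3 <;> ring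
        · have := two_mul_reflectedPow_le hq0.le hq1.le hx (h := -(2 * (a * b))) (by linarith)
            (by nlinarith [sq_nonneg (a + b)])
          rw [add_comm (reflectedPow _ _)]
          convert this using 3 <;> ring
      have e : signAverage (fun x => |x| ^ (2 * q)) (a :: b :: l) 1 =
          (signAverage (fun x => |x| ^ (2 * q)) ((a + b) :: l) 1 +
            signAverage (fun x => |x| ^ (2 * q)) ((a - b) :: l) 1) / 2 := by
        simp only [signAverage]
        rw [show (1 : ℝ) + a + b = 1 + (a + b) by ring, show (1 : ℝ) + a - b = 1 + (a - b) by ring,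
          show (1 : ℝ) - a + b = 1 - (a - b) by ring, show (1 : ℝ) - a - b = 1 - (a + b) by ring]
        ring
      rw [e]
      have := mul_le_mul_of_nonneg_left key hγ
      linarith

/-- Khintchine with the Gaussian constant. -/
theorem gaussMoment_mul_rpow_le_signAverage {q : ℝ} (hq : 7 / 8 ≤ q) (hq1 : q < 1)
    (hG : Real.Gamma (q + 1 / 2) ≤ √π / 2) : ∀ (l : List ℝ) (c : ℝ),
    gaussMoment q * (((c :: l).map fun a => a ^ 2).sum) ^ q ≤
      signAverage (fun x => |x| ^ (2 * q)) l c := by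
  have hγ : 0 ≤ gaussMoment q := (gaussMoment_pos (by linarith)).le
  have hq0 : 0 < q := by linarith
  have nonzero : ∀ (l : List ℝ) (c : ℝ), c ≠ 0 →
      gaussMoment q * (((c :: l).map fun a => a ^ 2).sum) ^ q ≤
        signAverage (fun x => |x| ^ (2 * q)) l c := by
    intro l c hc
    have hc2 : 0 < c ^ 2 := by positivity
    have e := signAverage_map_mul (2 * q) c (l.map (c⁻¹ * ·)) 1
    rw [List.map_map, mul_one, show (c * ·) ∘ (c⁻¹ * ·) = id by ext; simp [hc], List.map_id] at e
    have h1 := gaussMoment_mul_reflectedPow_le_signAverage hq hq1 hG _ (l.map (c⁻¹ * ·)) rfl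
    have h2 := one_add_rpow_le_reflectedPow hq0.le hq1.le (sum_map_sq_nonneg (l.map (c⁻¹ * ·)))
    have hpow : |c| ^ (2 * q) = (c ^ 2) ^ q := by rw [rpow_mul (abs_nonneg _), rpow_two, sq_abs]
    have hs : ((c :: l).map fun a => a ^ 2).sum =
        c ^ 2 * (1 + ((l.map (c⁻¹ * ·)).map fun a => a ^ 2).sum) := by
      rw [List.map_map, show (fun a : ℝ => a ^ 2) ∘ (c⁻¹ * ·) = fun a => (c⁻¹) ^ 2 * a ^ 2 by
        ext; simp [mul_pow], List.sum_map_mul_left]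
      simp
      field_simp
    have h3 := sum_map_sq_nonneg (l.map (c⁻¹ * ·))
    rw [hs, e, mul_rpow hc2.le (by linarith), ← hpow]
    calc _ = |c| ^ (2 * q) * (gaussMoment q *
          (1 + ((l.map (c⁻¹ * ·)).map fun a => a ^ 2).sum) ^ q) := by ring
      _ ≤ |c| ^ (2 * q) * (gaussMoment q *
          reflectedPow q ((l.map (c⁻¹ * ·)).map fun a => a ^ 2).sum) := by gcongr
      _ ≤ _ := by gcongr
  intro l
  induction l with
  | nil =>
    intro c
    by_cases hc : c = 0
    · simp [hc, zero_rpow hq0.ne', signAverage]; positivity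
    · exact nonzero _ c hc
  | cons a l ih =>
    intro c
    by_cases hc : c = 0
    · have e : signAverage (fun x => |x| ^ (2 * q)) (a :: l) 0 =
          signAverage (fun x => |x| ^ (2 * q)) l a := by
        simp only [signAverage, zero_add, zero_sub, signAverage_neg (f := fun x : ℝ => |x| ^ (2 * q))
          (fun x => by simp only [abs_neg])]
        ring
      rw [hc, e]
      simpa using ih a
    · exact nonzero _ c hc

theorem prod_bound_le_Gamma {x : ℝ} (hx : 0 < x) {n : ℕ} (hn : n ≠ 0) :
    (n : ℝ) ^ x * (Nat.factorial n : ℝ) / ∏ m ∈ Finset.range (n + 1), (x + m) ≤ Real.Gamma x := by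
  have h := Real.BohrMollerup.ge_logGammaSeq (f := log ∘ Real.Gamma) (x := x) (n := n)
    Real.convexOn_log_Gamma (fun {y} hy => by
      rw [Function.comp_apply, Real.Gamma_add_one hy.ne',
        log_mul hy.ne' (Real.Gamma_pos_of_pos hy).ne', add_comm, Function.comp_apply]) hx hn
  have hP : 0 < ∏ m ∈ Finset.range (n + 1), (x + m) := Finset.prod_pos fun m _ => by positivity
  have hn0 : 0 < (n : ℝ) := by positivity
  rw [← log_le_log_iff (by positivity) (Real.Gamma_pos_of_pos hx), log_div (by positivity) hP.ne',
    log_mul (by positivity) (by positivity), log_prod fun m _ => by positivity, log_rpow hn0]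
  simpa [Real.BohrMollerup.logGammaSeq, Real.Gamma_one] using h

theorem prod_three_eighths_add (n : ℕ) : ∏ m ∈ Finset.range n, ((3 : ℝ) / 8 + m) =
    (∏ m ∈ Finset.range n, (3 + 8 * m) : ℕ) / (8 ^ n : ℕ) := by
  have : ∀ m : ℕ, (3 : ℝ) / 8 + m = ((3 + 8 * m : ℕ) : ℝ) / 8 := fun m => by push_cast; ring
  simp only [this, Finset.prod_div_distrib, Finset.prod_const, Finset.card_range, Nat.cast_prod,
    Nat.cast_pow, Nat.cast_ofNat]

theorem factorial_bound : 88625 * (∏ m ∈ Finset.range 257, (3 + 8 * m)) ≤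
    300000 * (Nat.factorial 256 * 8 ^ 257) := by decide +kernel

theorem sqrt_pi_div_two_lt_Gamma_eleven_eighths : √π / 2 < Real.Gamma (11 / 8) := by
  have h0 : (0 : ℝ) < 3 / 8 := by norm_num
  have h256 : ((256 : ℕ) : ℝ) ^ (3 / 8 : ℝ) = 8 := by
    rw [show ((256 : ℕ) : ℝ) = 2 ^ (8 : ℝ) by norm_num, ← rpow_mul zero_le_two]
    norm_num
  have hpi : √π < 1.7725 := by
    rw [sqrt_lt' (by norm_num)]
    have := pi_lt_d6
    norm_num at this ⊢
    linarith
  have hΓ := prod_bound_le_Gamma h0 (n := 256) (by norm_num)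
  have hnum : ((88625 * (∏ m ∈ Finset.range 257, (3 + 8 * m)) : ℕ) : ℝ) ≤
      ((300000 * (Nat.factorial 256 * 8 ^ 257) : ℕ) : ℝ) := Nat.cast_le.2 factorial_bound
  rw [Nat.cast_mul, Nat.cast_mul 300000, Nat.cast_mul (Nat.factorial 256)] at hnum
  rw [show 256 + 1 = 257 from rfl, prod_three_eighths_add, h256] at hΓ
  have hP : (0 : ℝ) < (∏ m ∈ Finset.range 257, (3 + 8 * m) : ℕ) :=
    Nat.cast_pos.2 (Finset.prod_pos fun m _ => by positivity)
  have hE : (0 : ℝ) < (8 ^ 257 : ℕ) := Nat.cast_pos.2 (pow_pos (by norm_num) _)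
  generalize ((∏ m ∈ Finset.range 257, (3 + 8 * m) : ℕ) : ℝ) = P at *
  generalize ((Nat.factorial 256 : ℕ) : ℝ) = N at *
  generalize ((8 ^ 257 : ℕ) : ℝ) = E at *
  rw [show (11 : ℝ) / 8 = 3 / 8 + 1 by norm_num, Real.Gamma_add_one h0.ne']
  rw [div_div_eq_mul_div, div_le_iff₀ hP] at hΓ
  push_cast at hnum
  have : 0.88625 ≤ 3 / 8 * Real.Gamma (3 / 8) := by
    by_contra! hlt
    nlinarith
  linarith

theorem hasDerivAt_Gamma_three_halves :
    HasDerivAt Real.Gamma (√π * (1 - (eulerMascheroniConstant + 2 * log 2) / 2)) (3 / 2) := by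
  have h1 := (hasDerivAt_id (1 / 2 : ℝ)).mul hasDerivAt_Gamma_one_half
  have h2 : HasDerivAt (fun s => Real.Gamma (s + 1))
      (√π * (1 - (eulerMascheroniConstant + 2 * log 2) / 2)) (1 / 2) := by
    refine (h1.congr_of_eventuallyEq ?_).congr_deriv ?_
    · filter_upwards [lt_mem_nhds (show (0 : ℝ) < 1 / 2 by norm_num)] with s hs
      simp [Real.Gamma_add_one hs.ne']
    · rw [Real.Gamma_one_half_eq]; simp; ring
  have h3 := HasDerivAt.comp_sub_const (3 / 2) 1 (f := fun s => Real.Gamma (s + 1)) (by norm_num at h2 ⊢; exact h2)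
  simpa using h3

theorem eulerMascheroniConstant_add_lt_two : eulerMascheroniConstant + 2 * log 2 < 2 := by
  have h := eulerMascheroniConstant_lt_eulerMascheroniSeq' 16
  have h16 : log 16 = 4 * log 2 := by
    rw [show (16 : ℝ) = 2 ^ 4 by norm_num, log_pow]; norm_num
  have hH : harmonic 16 = 2436559 / 720720 := by
    norm_num [harmonic, Finset.sum_range_succ]
  rw [eulerMascheroniSeq', if_neg (by norm_num), hH] at h
  norm_num [h16] at h
  linarith [log_two_gt_d9]

theorem Gamma_three_halves : Real.Gamma (3 / 2) = √π / 2 := by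
  rw [show (3 : ℝ) / 2 = 1 / 2 + 1 by norm_num, Real.Gamma_add_one (by norm_num),
    Real.Gamma_one_half_eq]
  ring

theorem exists_Gamma_lt_three_halves {x : ℝ} (hx : x < 3 / 2) :
    ∃ y, x < y ∧ y < 3 / 2 ∧ Real.Gamma y < √π / 2 := by
  have hpos : 0 < √π * (1 - (eulerMascheroniConstant + 2 * log 2) / 2) :=
    mul_pos (by positivity) (by linarith [eulerMascheroniConstant_add_lt_two])
  have h := (hasDerivAt_iff_tendsto_slope_left_right.1 hasDerivAt_Gamma_three_halves).1
  obtain ⟨y, hy, hxy⟩ := ((h.eventually_const_lt hpos).and (Ioo_mem_nhdsLT hx)).exists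
  refine ⟨y, hxy.1, hxy.2, ?_⟩
  rw [slope_def_field, Gamma_three_halves] at hy
  have := (div_pos_iff.1 hy).resolve_left fun h => by linarith [h.2, hxy.2]
  linarith [this.1]

theorem Gamma_le_of_mem {x y z v : ℝ} (hx : 0 < x) (hxy : x ≤ y) (hyz : y ≤ z)
    (h1 : Real.Gamma x ≤ v) (h2 : Real.Gamma z ≤ v) : Real.Gamma y ≤ v :=
  (Real.convexOn_Gamma.le_max_of_mem_Icc (show 0 < x from hx) (show 0 < z by linarith)
    ⟨hxy, hyz⟩).trans (max_le h1 h2)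

theorem khintchineP0_spec : 7 / 4 ≤ khintchineP0 ∧ khintchineP0 < 2 ∧
    Real.Gamma ((khintchineP0 + 1) / 2) = √π / 2 := by
  obtain ⟨y, hy1, hy2, hy⟩ := exists_Gamma_lt_three_halves (x := 11 / 8) (by norm_num)
  have hcont : ContinuousOn Real.Gamma (Set.Icc (11 / 8) y) := fun z hz =>
    (Real.differentiableAt_Gamma fun m => by
      have : (0 : ℝ) ≤ m := m.cast_nonneg
      have := hz.1
      linarith).continuousAt.continuousWithinAt
  obtain ⟨z, hz, hzv⟩ := intermediate_value_Icc' hy1.le hcont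
    ⟨hy.le, sqrt_pi_div_two_lt_Gamma_eleven_eighths.le⟩
  have huniq : ∀ u w, 0 < u → u < w → w < 3 / 2 → Real.Gamma u = √π / 2 →
      Real.Gamma w ≠ √π / 2 := by
    intro u w hu huw hw h1 h2
    obtain ⟨t, ht1, ht2, ht⟩ := exists_Gamma_lt_three_halves hw
    have := Real.convexOn_Gamma.slope_mono_adjacent (show 0 < u from hu)
      (show 0 < t by linarith) huw ht1
    rw [h1, h2, sub_self, zero_div] at this
    have := div_neg_of_neg_of_pos (sub_neg.2 ht) (sub_pos.2 ht1)
    linarith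
  have hset : {p : ℝ | 1 < p ∧ p < 2 ∧ Real.Gamma ((p + 1) / 2) = √π / 2} = {2 * z - 1} := by
    ext p
    simp only [Set.mem_ofPred_eq, Set.mem_singleton_iff]
    constructor
    · rintro ⟨hp1, hp2, hp⟩
      rcases lt_trichotomy ((p + 1) / 2) z with h | h | h
      · exact absurd hzv (huniq _ _ (by linarith) h (by linarith [hz.2]) hp)
      · linarith
      · exact absurd hp (huniq _ _ (by linarith [hz.1]) h (by linarith) hzv)
    · rintro rfl
      refine ⟨by linarith [hz.1], by linarith [hz.2], ?_⟩
      rw [show (2 * z - 1 + 1) / 2 = z by ring, hzv]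
  rw [khintchineP0, hset, csInf_singleton]
  refine ⟨by linarith [hz.1], by linarith [hz.2], ?_⟩
  rw [show (2 * z - 1 + 1) / 2 = z by ring, hzv]

theorem Gamma_le_of_khintchineP0_le {r : ℝ} (h : khintchineP0 ≤ r) (hr : r ≤ 2) :
    Real.Gamma ((r + 1) / 2) ≤ √π / 2 := by
  obtain ⟨h1, -, h2⟩ := khintchineP0_spec
  exact Gamma_le_of_mem (by linarith) (show (khintchineP0 + 1) / 2 ≤ (r + 1) / 2 by linarith)
    (show (r + 1) / 2 ≤ 3 / 2 by linarith) h2.le Gamma_three_halves.le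

theorem rpow_interpolate {q q₀ x τ : ℝ} (hq : 0 < q) (hqq : q ≤ q₀) (hq1 : q₀ < 1) (hx : 0 ≤ x)
    (hτ : 0 < τ) : x ^ q₀ ≤ (1 - q₀) / (1 - q) * (τ ^ (q₀ - q) * x ^ q) +
      (q₀ - q) / (1 - q) * (τ ^ (q₀ - 1) * x) := by
  have h1 : 0 < 1 - q := by linarith
  have hs : 0 ≤ x / τ := by positivity
  have h := Real.geom_mean_le_arith_mean2_weighted (w₁ := (1 - q₀) / (1 - q))
    (w₂ := (q₀ - q) / (1 - q)) (p₁ := (x / τ) ^ q) (p₂ := x / τ)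
    (div_nonneg (by linarith) h1.le) (div_nonneg (by linarith) h1.le) (by positivity) hs
    (by rw [← add_div, div_eq_one_iff_eq h1.ne']; ring)
  rw [← rpow_mul hs, ← rpow_add_of_nonneg hs
    (mul_nonneg hq.le (div_nonneg (by linarith) h1.le)) (div_nonneg (by linarith) h1.le),
    show q * ((1 - q₀) / (1 - q)) + (q₀ - q) / (1 - q) = q₀ by field_simp; ring,
    div_rpow hx hτ.le, div_rpow hx hτ.le] at h
  have h0 : 0 < τ ^ q₀ := by positivity
  rw [div_le_iff₀ h0] at h
  refine h.trans_eq ?_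
  rw [rpow_sub hτ, rpow_sub hτ, rpow_one]
  ring

theorem abs_rpow_two_mul (x q : ℝ) : |x| ^ (2 * q) = (x ^ 2) ^ q := by
  rw [rpow_mul (abs_nonneg _), rpow_two, sq_abs]

theorem two_rpow_mul_le_signAverage_of_le {q q₀ : ℝ} (hq : 0 < q) (hqq : q ≤ q₀) (hq1 : q₀ < 1)
    (l : List ℝ) (c : ℝ)
    (h : 2 ^ q₀ / 2 * (((c :: l).map fun a => a ^ 2).sum) ^ q₀ ≤
      signAverage (fun x => |x| ^ (2 * q₀)) l c) :
    2 ^ q / 2 * (((c :: l).map fun a => a ^ 2).sum) ^ q ≤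
      signAverage (fun x => |x| ^ (2 * q)) l c := by
  have hσ := sum_map_sq_nonneg (c :: l)
  have hsq := signAverage_sq l c
  generalize ((c :: l).map fun a => a ^ 2).sum = σ at *
  rcases hσ.eq_or_lt with rfl | hσ
  · rw [zero_rpow hq.ne', mul_zero]
    exact signAverage_nonneg (fun x => by positivity) _ _
  have hτ : 0 < 2 * σ := by positivity
  have hle := signAverage_mono (f := fun x : ℝ => |x| ^ (2 * q₀))
    (g := fun x => (1 - q₀) / (1 - q) * ((2 * σ) ^ (q₀ - q) * |x| ^ (2 * q)) +
      (q₀ - q) / (1 - q) * ((2 * σ) ^ (q₀ - 1) * x ^ 2)) (fun x => by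
        rw [abs_rpow_two_mul, abs_rpow_two_mul]
        exact rpow_interpolate hq hqq hq1 (sq_nonneg x) hτ) l c
  rw [signAverage_add, signAverage_const_mul, signAverage_const_mul, signAverage_const_mul,
    signAverage_const_mul, hsq] at hle
  have h2 := h.trans hle
  rw [div_mul_eq_mul_div, ← mul_rpow zero_le_two hσ.le] at h2
  rw [div_mul_eq_mul_div, ← mul_rpow zero_le_two hσ.le]
  have hE : 0 < (2 * σ) ^ (q₀ - q) := by positivity
  have e1 : (2 * σ) ^ q₀ = (2 * σ) ^ (q₀ - q) * (2 * σ) ^ q := by rw [← rpow_add hτ]; ring_nf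
  have e2 : (2 * σ) ^ (q₀ - 1) * σ = (2 * σ) ^ q₀ / 2 := by
    rw [rpow_sub_one hτ.ne']; field_simp
  have h1 : 0 < 1 - q := by linarith
  rw [e2, e1] at h2
  have hw : (q₀ - q) / (1 - q) = 1 - (1 - q₀) / (1 - q) := by field_simp; ring
  rw [hw] at h2
  have hw0 : 0 < (1 - q₀) / (1 - q) := div_pos (by linarith) h1
  refine le_of_mul_le_mul_left ?_ (mul_pos hw0 hE)
  linarith

/-- The sharp Khintchine inequality in the second moment form, for exponents at most `2`. -/
theorem rpow_sum_sq_le_khintchineA_rpow_mul_signAverage {r : ℝ} (hr : 0 < r) (hr2 : r ≤ 2)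
    (l : List ℝ) (c : ℝ) : (((c :: l).map fun a => a ^ 2).sum) ^ (r / 2) ≤
      khintchineA r ^ r * signAverage (fun x => |x| ^ r) l c := by
  obtain ⟨hp1, hp2, hp⟩ := khintchineP0_spec
  rw [khintchineA]
  split_ifs with h h'
  · have h0 := gaussMoment_mul_rpow_le_signAverage (q := khintchineP0 / 2) (by linarith)
      (by linarith) (by rw [← add_div, hp]) l c
    have hg : gaussMoment (khintchineP0 / 2) = 2 ^ (khintchineP0 / 2) / 2 := by
      rw [gaussMoment, ← add_div, hp]
      field_simp
    rw [hg] at h0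
    have h1 := two_rpow_mul_le_signAverage_of_le (q := r / 2) (by linarith)
      (by linarith) (by linarith) l c h0
    rw [mul_div_cancel₀ _ two_ne_zero] at h1
    have e : ((2 : ℝ) ^ (1 / r - 1 / 2)) ^ r * (2 ^ (r / 2) / 2) = 1 := by
      rw [← rpow_mul zero_le_two, ← rpow_sub_one two_ne_zero, ← rpow_add two_pos,
        show (1 / r - 1 / 2) * r + (r / 2 - 1) = 0 by field_simp; ring, rpow_zero]
    calc _ = ((2 : ℝ) ^ (1 / r - 1 / 2)) ^ r * (2 ^ (r / 2) / 2 *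
          (((c :: l).map fun a => a ^ 2).sum) ^ (r / 2)) := by rw [← mul_assoc, e, one_mul]
      _ ≤ _ := by gcongr
  · have h0 := gaussMoment_mul_rpow_le_signAverage (q := r / 2) (by linarith)
      (by linarith) (by rw [← add_div]; exact Gamma_le_of_khintchineP0_le (by linarith) hr2) l c
    rw [mul_div_cancel₀ _ two_ne_zero] at h0
    have hΓ : 0 < Real.Gamma ((r + 1) / 2) := Real.Gamma_pos_of_pos (by linarith)
    have hA : 0 < 1 / √2 * (Real.Gamma ((r + 1) / 2) / √π) ^ (-(1 / r)) := by positivity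
    have e : (1 / √2 * (Real.Gamma ((r + 1) / 2) / √π) ^ (-(1 / r))) ^ r * gaussMoment (r / 2) = 1 := by
      rw [gaussMoment, ← add_div, mul_rpow (by positivity) (by positivity),
        ← rpow_mul (by positivity), show -(1 / r) * r = -1 by field_simp, rpow_neg_one,
        div_rpow zero_le_one (by positivity), one_rpow, sqrt_eq_rpow 2, ← rpow_mul zero_le_two,
        show 1 / 2 * r = r / 2 by ring]
      field_simp
    calc _ = (1 / √2 * (Real.Gamma ((r + 1) / 2) / √π) ^ (-(1 / r))) ^ r * (gaussMoment (r / 2) *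
          (((c :: l).map fun a => a ^ 2).sum) ^ (r / 2)) := by rw [← mul_assoc, e, one_mul]
      _ ≤ _ := by gcongr
  · obtain rfl : r = 2 := by linarith
    have := signAverage_sq l c
    rw [div_self two_ne_zero, rpow_one, one_rpow, one_mul, ← this]
    simp only [rpow_two, sq_abs, le_refl]

theorem signAverage_le_of_cube {n : ℕ} {F : (Fin n → ℝ) → ℝ} {K : ℝ}
    (hF : ∀ y, (∀ j, |y j| ≤ 1) → F y ≤ K) : ∀ (s : List (Fin n)) (c : Fin n → ℝ), s.Nodup →
    (∀ j ∈ s, c j = 0) → (∀ j, |c j| ≤ 1) → signAverage F (s.map fun j => Pi.single j 1) c ≤ K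
  | [], c, _, _, hc => hF c hc
  | a :: s, c, hs, h0, hc => by
    have ha := h0 a List.mem_cons_self
    have hs' := List.nodup_cons.1 hs
    have step : ∀ ε : ℝ, |ε| = 1 → signAverage F (s.map fun j => Pi.single j 1)
        (c + ε • Pi.single a 1) ≤ K := fun ε hε => by
      refine signAverage_le_of_cube hF s _ hs'.2 (fun j hj => ?_) fun j => ?_
      · have : j ≠ a := fun h => hs'.1 (h ▸ hj)
        simp [this, h0 j (List.mem_cons_of_mem _ hj)]
      · by_cases h : j = a
        · subst h; simp [ha, hε]
        · simpa [h] using hc j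
    have h1 := step 1 (by simp)
    have h2 := step (-1) (by simp)
    rw [one_smul] at h1
    rw [neg_one_smul, ← sub_eq_add_neg] at h2
    simp only [List.map_cons, signAverage]
    linarith

theorem abs_le_one_of_lpNorm_le_one {p : ℝ} (hp : 0 < p) {n : ℕ} {x : Fin n → ℝ}
    (hx : _root_.lpNorm p x ≤ 1) (i : Fin n) : |x i| ≤ 1 := by
  have h0 : 0 ≤ ∑ i, |x i| ^ p := Finset.sum_nonneg fun i _ => by positivity
  have h1 : ∑ i, |x i| ^ p ≤ 1 := by
    by_contra! h
    exact absurd hx (not_le.2 (one_lt_rpow h (by positivity)))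
  have h2 := (Finset.single_le_sum (f := fun i => |x i| ^ p) (fun i _ => by positivity)
    (Finset.mem_univ i)).trans h1
  by_contra! h
  exact absurd h2 (not_le.2 (one_lt_rpow h hp))

theorem abs_le_linfNorm {n : ℕ} (y : Fin n → ℝ) (i : Fin n) : |y i| ≤ linfNorm y :=
  le_ciSup (f := fun i => |y i|) (Set.finite_range _).bddAbove i

theorem linfNorm_le_one {n : ℕ} {y : Fin n → ℝ} (h : ∀ i, |y i| ≤ 1) : linfNorm y ≤ 1 :=
  Real.iSup_le h zero_le_one

theorem bilin_apply {N n : ℕ} (T : (Fin N → ℝ) →ₗ[ℝ] (Fin n → ℝ) →ₗ[ℝ] ℝ) (x : Fin N → ℝ)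
    (y : Fin n → ℝ) : T x y = ∑ i, x i * T (Pi.single i 1) y := by
  conv_lhs => rw [pi_eq_sum_univ' x]
  simp [LinearMap.sum_apply]

theorem le_bilinOpNorm {p : ℝ} (hp : 0 < p) {N n : ℕ}
    (T : (Fin N → ℝ) →ₗ[ℝ] (Fin n → ℝ) →ₗ[ℝ] ℝ) {x : Fin N → ℝ} {y : Fin n → ℝ}
    (hx : _root_.lpNorm p x ≤ 1) (hy : ∀ j, |y j| ≤ 1) : |T x y| ≤ bilinOpNorm p T := by
  refine le_csSup ⟨∑ i, ∑ j, |T (Pi.single i 1) (Pi.single j 1)|, ?_⟩ ⟨x, y, hx, linfNorm_le_one hy, rfl⟩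
  rintro _ ⟨x, y, hx, hy, rfl⟩
  rw [bilin_apply]
  refine (Finset.abs_sum_le_sum_abs _ _).trans (Finset.sum_le_sum fun i _ => ?_)
  rw [abs_mul]
  refine (mul_le_of_le_one_left (abs_nonneg _) (abs_le_one_of_lpNorm_le_one hp hx i)).trans ?_
  conv_lhs => rw [pi_eq_sum_univ' y]
  simp only [map_sum, map_smul, smul_eq_mul]
  refine (Finset.abs_sum_le_sum_abs _ _).trans (Finset.sum_le_sum fun j _ => ?_)
  rw [abs_mul]
  exact mul_le_of_le_one_left (abs_nonneg _) ((abs_le_linfNorm y j).trans hy)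

/-- `ℓ_p`–`ℓ_r` duality for the form applied to a point of the cube. -/
theorem sum_abs_rpow_le_bilinOpNorm_rpow {p r : ℝ} (hpr : p.HolderConjugate r) {N n : ℕ}
    (T : (Fin N → ℝ) →ₗ[ℝ] (Fin n → ℝ) →ₗ[ℝ] ℝ) {y : Fin n → ℝ} (hy : ∀ j, |y j| ≤ 1) :
    ∑ i, |T (Pi.single i 1) y| ^ r ≤ bilinOpNorm p T ^ r := by
  set v : Fin N → ℝ := fun i => T (Pi.single i 1) y with hv
  set S := ∑ i, |v i| ^ r with hS
  have hS0 : 0 ≤ S := Finset.sum_nonneg fun i _ => by positivity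
  have hr := hpr.symm.pos
  have hp := hpr.pos
  have hB : 0 ≤ bilinOpNorm p T := (abs_nonneg _).trans
    (le_bilinOpNorm hp T (x := 0) (y := y) (by simp [_root_.lpNorm, hp.ne']) hy)
  rcases hS0.eq_or_lt with h | hSpos
  · rw [← h]; positivity
  have hpr' : (r - 1) * p = r := hpr.symm.sub_one_mul_conj
  set x : Fin N → ℝ := fun i => |v i| ^ r / v i / S ^ (1 / p) with hx
  have hxabs : ∀ i, |x i| ^ p = |v i| ^ r / S := fun i => by
    by_cases h : v i = 0
    · simp [hx, h, hp.ne', hr.ne']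
    · have hvi : |v i| ≠ 0 := abs_ne_zero.2 h
      rw [hx, abs_div, abs_div, abs_of_nonneg (a := |v i| ^ r) (by positivity), ← rpow_sub_one hvi,
        abs_of_nonneg (a := S ^ (1 / p)) (by positivity), div_rpow (by positivity) (by positivity),
        ← rpow_mul (abs_nonneg _), hpr', ← rpow_mul hS0, one_div_mul_cancel hp.ne', rpow_one]
  have hxn : _root_.lpNorm p x ≤ 1 := by
    rw [_root_.lpNorm]
    simp only [hxabs]
    rw [← Finset.sum_div, ← hS, div_self hSpos.ne', one_rpow]
  have hT : T x y = S ^ (1 / r) := by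
    have e : ∀ i, x i * v i = |v i| ^ r / S ^ (1 / p) := fun i => by
      by_cases h : v i = 0
      · simp [h, hr.ne']
      · rw [hx]; field_simp
    rw [bilin_apply, Finset.sum_congr rfl fun i _ => e i, ← Finset.sum_div, ← hS,
      show 1 / r = 1 - 1 / p by simpa using hpr.one_sub_inv.symm,
      rpow_sub hSpos, rpow_one]
  have h1 := le_bilinOpNorm hp T hxn hy
  rw [hT, abs_of_nonneg (by positivity)] at h1
  calc S = (S ^ (1 / r)) ^ r := by rw [← rpow_mul hS0, one_div_mul_cancel hr.ne', rpow_one]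
    _ ≤ _ := by gcongr

/-- Mixed `(ℓ_{p/(p-1)}, ℓ₂)`-Littlewood inequality with constant `A_{p/(p-1)}`. -/
theorem mixed_littlewood_bilinear (p : ℝ) (hp : 2 ≤ p) (n : ℕ)
    (T : (Fin n → ℝ) →ₗ[ℝ] (Fin n → ℝ) →ₗ[ℝ] ℝ) :
    (∑ i : Fin n, (∑ j : Fin n, |T (Pi.single i 1) (Pi.single j 1)| ^ (2 : ℝ))
        ^ ((1 / 2) * (p / (p - 1)))) ^ ((p - 1) / p)
      ≤ khintchineA (p / (p - 1)) * bilinOpNorm p T := by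
  have hpr : p.HolderConjugate (p / (p - 1)) := Real.HolderConjugate.conjExponent (by linarith)
  have hr2 : p / (p - 1) ≤ 2 := by rw [div_le_iff₀ (by linarith)]; linarith
  have hinv : (p - 1) / p = 1 / (p / (p - 1)) := (one_div_div _ _).symm
  rw [hinv]
  generalize p / (p - 1) = r at *
  have hr := hpr.symm.pos
  have hp0 := hpr.pos
  have hA : 0 ≤ khintchineA r := by
    have : 0 < Real.Gamma ((r + 1) / 2) := Real.Gamma_pos_of_pos (by linarith)
    rw [khintchineA]
    split_ifs <;> positivity
  have hB : 0 ≤ bilinOpNorm p T := (abs_nonneg _).trans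
    (le_bilinOpNorm hp0 T (x := 0) (y := 0) (by simp [_root_.lpNorm, hp0.ne']) (by simp))
  have h0 : 0 ≤ ∑ i : Fin n, (∑ j : Fin n, |T (Pi.single i 1) (Pi.single j 1)| ^ (2 : ℝ))
      ^ (1 / 2 * r) := Finset.sum_nonneg fun i _ =>
    rpow_nonneg (Finset.sum_nonneg fun j _ => by positivity) _
  have key : ∑ i : Fin n, (∑ j : Fin n, |T (Pi.single i 1) (Pi.single j 1)| ^ (2 : ℝ))
      ^ (1 / 2 * r) ≤ (khintchineA r * bilinOpNorm p T) ^ r := by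
    rw [mul_rpow hA hB]
    have hcube := signAverage_le_of_cube (K := bilinOpNorm p T ^ r)
      (fun y hy => sum_abs_rpow_le_bilinOpNorm_rpow hpr T hy) (List.finRange n) 0
      (List.nodup_finRange n) (by simp) (by simp)
    rw [signAverage_sum] at hcube
    refine le_trans ?_ (mul_le_mul_of_nonneg_left hcube (by positivity))
    rw [Finset.mul_sum]
    refine Finset.sum_le_sum fun i _ => ?_
    have e := signAverage_comp (T (Pi.single i 1)).toAddMonoidHom (fun x => |x| ^ r)
      ((List.finRange n).map fun j => Pi.single j 1) 0
    simp only [LinearMap.toAddMonoidHom_coe] at e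
    rw [e]
    have h := rpow_sum_sq_le_khintchineA_rpow_mul_signAverage hr hr2
      (((List.finRange n).map fun j => Pi.single j 1).map (T (Pi.single i 1)).toAddMonoidHom)
      ((T (Pi.single i 1)).toAddMonoidHom 0)
    refine le_trans (le_of_eq ?_) h
    rw [show 1 / 2 * r = r / 2 by ring]
    congr 1
    simp [List.map_map, Function.comp_def, Fin.sum_univ_def]
  calc _ ≤ ((khintchineA r * bilinOpNorm p T) ^ r) ^ (1 / r) := by gcongr
    _ = _ := by rw [← rpow_mul (by positivity), mul_one_div_cancel hr.ne', rpow_one]
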